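/- Let n be an integer with 2 ≤ n ≤ 5. In ℝ[x_1,…,x_n] define the homogeneous polynomials f_j = C(n,j)·x_1^{2j} − e_j(x_2²,…,x_n²) for 1 ≤ j ≤ n, where C(n,j) is the binomial coefficient, e_j is taken in the n−1 listed arguments, and e_n(x_2²,…,x_n²) := 0 (so f_n = x_1^{2n}). Then ω = 1·x_1 + 2·x_2 + ⋯ + n·x_n is a Hard Lefschetz element of A = ℝ[x_1,…,x_n]/(f_1,…,f_n) with socle degree N = n². -/

import Mathlib

open MvPolynomial Finset

noncomputable section

/-- The `j`-th elementary symmetric polynomial of the listed arguments `v 0, …, v (m-1)`. -/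
def esymmOf {R : Type*} [CommRing R] {m : ℕ} (j : ℕ) (v : Fin m → R) : R :=
  ∑ s ∈ Finset.powersetCard j (Finset.univ : Finset (Fin m)), ∏ i ∈ s, v i

/-- The degree-`e` graded piece of `ℝ[x_1,…,x_r]/I`: the image in the quotient of the
homogeneous polynomials of degree `e`. -/
def gradedPiece {r : ℕ} (I : Ideal (MvPolynomial (Fin r) ℝ)) (e : ℕ) :
    Submodule ℝ (MvPolynomial (Fin r) ℝ ⧸ I) :=
  (homogeneousSubmodule (Fin r) ℝ e).map (Ideal.Quotient.mkₐ ℝ I).toLinearMap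

/-- `ω` is a Hard Lefschetz element of `ℝ[x_1,…,x_r]/I` with socle degree `N`:
all graded pieces above degree `N` vanish, and for `0 ≤ 2d ≤ N` multiplication by
`ω^(N-2d)` is a bijective linear map from the degree-`d` piece onto the degree-`(N-d)` piece. -/
def IsHardLefschetzElement {r : ℕ} (I : Ideal (MvPolynomial (Fin r) ℝ))
    (ω : MvPolynomial (Fin r) ℝ ⧸ I) (N : ℕ) : Prop :=
  (∀ e, N < e → gradedPiece I e = ⊥) ∧
  ∀ d : ℕ, 2 * d ≤ N →
    (gradedPiece I d).map (LinearMap.mulLeft ℝ (ω ^ (N - 2 * d))) = gradedPiece I (N - d) ∧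
    ∀ x ∈ gradedPiece I d, ω ^ (N - 2 * d) * x = 0 → x = 0

/-- The `n-1` listed arguments `(x_2², …, x_n²)` (variables are `X 0, …, X (n-1)` with
`x_i = X (i-1)`). -/
def sqArgs (n : ℕ) : Fin (n - 1) → MvPolynomial (Fin n) ℝ := fun i =>
  (X (⟨i.val + 1, by have := i.isLt; omega⟩ : Fin n)) ^ 2

/-- The relations `f_j = C(n,j)·x_1^{2j} − e_j(x_2²,…,x_n²)`, `1 ≤ j ≤ n`
(with `e_n` of the `n-1` arguments equal to `0`, so `f_n = x_1^{2n}`). -/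
def rel1 (n : ℕ) : Fin n → MvPolynomial (Fin n) ℝ := fun j =>
  (n.choose (j.val + 1) : MvPolynomial (Fin n) ℝ) * (X (⟨0, j.pos⟩ : Fin n)) ^ (2 * (j.val + 1))
    - esymmOf (j.val + 1) (sqArgs n)

/-- `ω = 1·x_1 + 2·x_2 + ⋯ + n·x_n`. -/
def omegaPoly (n : ℕ) : MvPolynomial (Fin n) ℝ :=
  ∑ i : Fin n, C ((i.val : ℝ) + 1) * X i

/-!
Write `n = μ + 1`, `N = n ^ 2`, `t = x_1` and let `x` stand for the remaining `μ` variables.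

*Upper bound for the graded pieces.* The relations say
`∑ k, (-1) ^ k * C(n, k) * t ^ (2 k) * z ^ k = ∏ (1 - x_i ^ 2 z)`. Dividing by the factors on the
right one at a time expresses `x_i ^ 2`, `x_j ^ 4`, `x_k ^ 6`, … through lower powers of the same
variable, with coefficients in `t` and the variables not divided out, and `t ^ (2 n) = 0`
(`Fl_le_below`, `qt_pow`). Hence the monomials `t ^ (d - ∑ b) * x ^ b` with `b` below the bounds
`2, 4, …, 2 μ` and `d - ∑ b < 2 n` span the degree-`d` piece (`gradedPiece_le_span`); the pieces
above degree `N` vanish (`gradedPiece_eq_bot`).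

*A functional on the top degree.* The linear functional `Lf` on polynomials takes the monomial of
degree `N` with exponents `b` of `x` to the Vandermonde determinant of `-1` and the entries of `b`
if these are all odd, and to `0` otherwise. It kills the ideal (`Lf_mem`): the sum of the Vandermonde
determinants obtained by moving `J` of the `n` points by `2` is `C(n, J)` times the original one
(`det_shift`), and the terms in which the point `-1` moves to `1` vanish, since the degree leaves no
room for `μ` distinct odd numbers besides `1` (`val_rel`).

*Lefschetz from Gram determinants.* Pairing `ω ^ (N - 2 d) * y` with `z` through `Lf` shows that
multiplication by `ω ^ (N - 2 d)` is injective on the span of the listed monomials as soon as their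
Gram matrix is nonsingular, and a count of monomials gives surjectivity (`lefschetz_at`). No basis
theorem for the quotient is needed: the determinant itself proves independence.

*The determinants.* The entries of the Gram matrices are the integers `DD`, obtained from the values
of the functional by iterating multiplication by `ω` on tables of values. It suffices to see
that the determinant is nonzero modulo the prime `pp`. The check `checkD` computes the tables modulo
`pp`, extracts the rows of the Gram matrix and eliminates; tables and rows are packed into single
natural numbers, one lane of `W` bits for each entry, so that the kernel works on whole rows by its
built-in arithmetic. The lanes are sums of residues that are reduced rarely, and the bound tested by
`checkD` rules out carries between lanes. `checkD_sound` turns the result `true` into the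
nonvanishing of the determinant.
-/

namespace HL

/-! ### Elimination on packed rows -/

/-- Call-by-value application: in the kernel, `n` is reduced to a literal before `f` sees it. -/
def force {α : Type} (n : ℕ) (f : ℕ → α) : α := Nat.rec (f 0) (fun m _ => f (Nat.succ m)) n

/-- The prime modulo which the Gram matrices are inverted. -/
def pp : ℕ := 65521

/-- `a ^ e` modulo `pp`, by repeated squaring with at most the given number of steps. It only supplies
inverses, which `pivot` tests by multiplying back. -/
def powmod (a : ℕ) : ℕ → ℕ → ℕ
  | 0, _ => 1
  | f + 1, e => let r := powmod (a * a % pp) f (e / 2)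
                if e % 2 = 1 then a * r % pp else r

/-- Multiply the first `h` lanes by `iv` and reduce them modulo `pp`. -/
def normRow (W iv : ℕ) (h : ℕ) : ℕ → ℕ :=
  Nat.rec (fun _ => 0)
    (fun _ ih R => Nat.add (Nat.mod (Nat.mul (Nat.mod R (Nat.pow 2 W)) iv) pp)
      (Nat.mul (Nat.pow 2 W) (force (Nat.shiftRight R W) ih))) h

/-- Eliminate the lowest lane of each row with the pivot row `P` and drop that lane. -/
def elimRows (W P : ℕ) (k : List ℕ → Bool) (rows : List ℕ) : List ℕ → Bool :=
  List.rec k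
    (fun R _ ih acc =>
      force (Nat.shiftRight
        (Nat.add R (Nat.mul (Nat.mod (Nat.mod R (Nat.pow 2 W)) pp) P)) W)
        fun S => ih (S :: acc)) rows

/-- Search a row whose lowest lane is a unit modulo `pp`, scale it so that this lane becomes
`-1 = 65520`, and eliminate with it. Rows whose lowest lane is zero only lose that lane. -/
def pivot (W h : ℕ) (k : List ℕ → Bool) (rows : List ℕ) : List ℕ → Bool :=
  List.rec (fun _ => false)
    (fun R Rs ih acc =>
      Nat.rec (force (Nat.shiftRight R W) fun S => ih (S :: acc))
        (fun a _ =>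
          force (powmod (Nat.sub 65520 a) 16 65519) fun iv =>
          force (normRow W iv h R) fun P =>
          and (Nat.beq (Nat.mod P (Nat.pow 2 W)) 65520) (elimRows W P k Rs acc))
        (Nat.mod (Nat.mod R (Nat.pow 2 W)) pp)) rows

/-- Gaussian elimination on rows of `h` lanes; `true` certifies that their common kernel modulo
`pp` is zero. -/
def go (W h : ℕ) : List ℕ → Bool :=
  Nat.rec (fun _ => true) (fun h ih rows => pivot W (Nat.succ h) ih rows []) h

theorem force_eq {α : Type} (n : ℕ) (f : ℕ → α) : force n f = f n := by
  cases n <;> rfl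

/-- Pairing of a coefficient vector with a list of lanes modulo `pp`. -/
def dot : List (ZMod pp) → List ℕ → ZMod pp
  | c :: cs, x :: xs => c * x + dot cs xs
  | _, _ => 0

/-- `R` packs a row of `h` lanes, each at most `M`, orthogonal to `c`. -/
def RowOK (W M : ℕ) (c : List (ZMod pp)) (R : ℕ) : Prop :=
  ∃ L : List ℕ, L.length = c.length ∧ R = Nat.ofDigits (2 ^ W) L ∧ (∀ x ∈ L, x ≤ M) ∧ dot c L = 0

theorem dot_normalize (iv : ℕ) : ∀ (c : List (ZMod pp)) (L : List ℕ),
    dot c (L.map fun x => x * iv % pp) = iv * dot c L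
  | [], _ => by simp [dot]
  | _ :: _, [] => by simp [dot]
  | c :: cs, x :: xs => by
    simp only [List.map_cons, dot, dot_normalize iv cs xs, ZMod.natCast_mod]
    push_cast; ring

theorem dot_axpy (y : ℕ) : ∀ (c : List (ZMod pp)) (L P : List ℕ), L.length = P.length →
    dot c (List.zipWith (fun a b => a + y * b) L P) = dot c L + y * dot c P
  | [], _, _, _ => by simp [dot]
  | _ :: _, [], P, h => by
    have : P = [] := List.length_eq_zero_iff.1 h.symm
    simp [dot, this]
  | c :: cs, x :: xs, [], h => by simp at h
  | c :: cs, x :: xs, p :: ps, h => by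
    simp only [List.zipWith_cons_cons, dot, dot_axpy y cs xs ps (by simpa using h)]
    push_cast; ring

theorem ofDigits_axpy (B y : ℕ) : ∀ (L P : List ℕ), L.length = P.length →
    Nat.ofDigits B (List.zipWith (fun a b => a + y * b) L P)
      = Nat.ofDigits B L + y * Nat.ofDigits B P
  | [], P, h => by
    have : P = [] := List.length_eq_zero_iff.1 h.symm
    simp [this]
  | x :: xs, [], h => by simp at h
  | x :: xs, p :: ps, h => by
    simp only [List.zipWith_cons_cons, Nat.ofDigits_cons, ofDigits_axpy B y xs ps (by simpa using h)]
    ring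

theorem cons_mod {B x : ℕ} (L : List ℕ) (hx : x < B) : Nat.ofDigits B (x :: L) % B = x := by
  rw [Nat.ofDigits_cons, Nat.add_mul_mod_self_left, Nat.mod_eq_of_lt hx]

theorem cons_div {B x : ℕ} (L : List ℕ) (hx : x < B) :
    Nat.ofDigits B (x :: L) / B = Nat.ofDigits B L := by
  have hB : 0 < B := by omega
  rw [Nat.ofDigits_cons, Nat.add_mul_div_left _ _ hB, Nat.div_eq_of_lt hx, zero_add]

theorem shiftRight_eq (R W : ℕ) : Nat.shiftRight R W = R / 2 ^ W := Nat.shiftRight_eq_div_pow R W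

theorem normRow_eq (W iv : ℕ) : ∀ (L : List ℕ), (∀ x ∈ L, x < 2 ^ W) →
    normRow W iv L.length (Nat.ofDigits (2 ^ W) L)
      = Nat.ofDigits (2 ^ W) (L.map fun x => x * iv % pp)
  | [], _ => rfl
  | x :: xs, h => by
    have hx := h x (by simp)
    have ih := normRow_eq W iv xs (fun y hy => h y (by simp [hy]))
    have e : normRow W iv (x :: xs).length (Nat.ofDigits (2 ^ W) (x :: xs))
      = (Nat.ofDigits (2 ^ W) (x :: xs) % 2 ^ W * iv % pp)
        + 2 ^ W * force (Nat.shiftRight (Nat.ofDigits (2 ^ W) (x :: xs)) W)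
          (normRow W iv xs.length) := rfl
    rw [e, force_eq, shiftRight_eq, cons_mod _ hx, cons_div _ hx, ih, List.map_cons,
      Nat.ofDigits_cons]

theorem RowOK.mono {W M M' : ℕ} (h : M ≤ M') {c : List (ZMod pp)} {R : ℕ} (hR : RowOK W M c R) :
    RowOK W M' c R := by
  obtain ⟨L, h1, h2, h3, h4⟩ := hR
  exact ⟨L, h1, h2, fun x hx => (h3 x hx).trans h, h4⟩

instance : Fact (Nat.Prime pp) := ⟨by unfold pp; norm_num⟩

theorem elimRows_sound (W M P : ℕ) (k : List ℕ → Bool) (c₀ : ZMod pp) (cs : List (ZMod pp))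
    (LP : List ℕ) (hlen : LP.length = cs.length)
    (hP : P = Nat.ofDigits (2 ^ W) (65520 :: LP)) (hLP : ∀ x ∈ LP, x < pp)
    (hc : c₀ = dot cs LP) (hM : M + pp * pp < 2 ^ W)
    (hk : ∀ rows, (∀ R ∈ rows, RowOK W (M + pp * pp) cs R) → k rows = true → ∀ x ∈ cs, x = 0) :
    ∀ rows acc, (∀ R ∈ rows, RowOK W M (c₀ :: cs) R) →
      (∀ R ∈ acc, RowOK W (M + pp * pp) cs R) → elimRows W P k rows acc = true →
      ∀ x ∈ cs, x = 0
  | [], acc, _, h2, h3 => hk acc h2 h3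
  | R :: Rs, acc, h1, h2, h3 => by
    have e : elimRows W P k (R :: Rs) acc
      = force (Nat.shiftRight (R + R % 2 ^ W % pp * P) W)
          fun S => elimRows W P k Rs (S :: acc) := rfl
    rw [e, force_eq, shiftRight_eq] at h3
    refine elimRows_sound W M P k c₀ cs LP hlen hP hLP hc hM hk Rs _
      (fun R hR => h1 R (by simp [hR])) ?_ h3
    intro S hS
    rcases List.mem_cons.1 hS with rfl | hS
    swap
    · exact h2 S hS
    obtain ⟨L, g1, g2, g3, g4⟩ := h1 R (by simp)
    match L, g1, g3, g4 with
    | x :: xs, g1, g3, g4 =>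
      have hx : x ≤ M := g3 x (by simp)
      have hxl : x < 2 ^ W := by omega
      have hpos : 0 < pp := by decide
      have hy : x % pp < pp := Nat.mod_lt _ hpos
      have hl : xs.length = LP.length := by simp at g1; omega
      refine ⟨List.zipWith (fun a b => a + (x % pp) * b) xs LP, by simp; omega, ?_, ?_, ?_⟩
      · rw [g2, cons_mod _ hxl, hP, ← ofDigits_axpy _ _ _ _ (by simp [hl]), List.zipWith_cons_cons,
          cons_div]
        have : x % pp * 65520 ≤ pp * pp := Nat.mul_le_mul hy.le (by decide)
        omega
      · intro z hz
        obtain ⟨i, hi, rfl⟩ := List.mem_iff_getElem.1 hz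
        rw [List.getElem_zipWith]
        have a1 := g3 (xs[i]'(by simp at hi; omega)) (by simp)
        have a2 := hLP (LP[i]'(by simp at hi; omega)) (by simp)
        have : x % pp * (LP[i]'(by simp at hi; omega)) ≤ pp * pp := Nat.mul_le_mul hy.le a2.le
        omega
      · rw [dot_axpy _ _ _ _ hl, ← hc]
        simp only [dot] at g4
        rw [ZMod.natCast_mod]
        linear_combination g4

theorem neg_one_eq : ((65520 : ℕ) : ZMod pp) = -1 := by decide

theorem pivot_sound (W M : ℕ) (k : List ℕ → Bool) (c₀ : ZMod pp) (cs : List (ZMod pp))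
    (hM : M + pp * pp < 2 ^ W)
    (hk : ∀ rows, (∀ R ∈ rows, RowOK W (M + pp * pp) cs R) → k rows = true → ∀ x ∈ cs, x = 0) :
    ∀ rows acc, (∀ R ∈ rows, RowOK W M (c₀ :: cs) R) →
      (∀ R ∈ acc, RowOK W (M + pp * pp) cs R) → pivot W (cs.length + 1) k rows acc = true →
      ∀ x ∈ c₀ :: cs, x = 0
  | [], acc, _, _, h3 => by cases h3
  | R :: Rs, acc, h1, h2, h3 => by
    obtain ⟨L, g1, g2, g3, g4⟩ := h1 R (by simp)
    match L, g1, g2, g3, g4 with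
    | x :: xs, g1, g2, g3, g4 =>
      have hx : x ≤ M := g3 x (by simp)
      have hxl : x < 2 ^ W := by omega
      have hpos : 0 < pp := by decide
      have e : pivot W (cs.length + 1) k (R :: Rs) acc =
        Nat.rec (force (Nat.shiftRight R W) fun S => pivot W (cs.length + 1) k Rs (S :: acc))
        (fun a _ =>
          force (powmod (Nat.sub 65520 a) 16 65519) fun iv =>
          force (normRow W iv (cs.length + 1) R) fun P =>
          and (Nat.beq (P % 2 ^ W) 65520) (elimRows W P k Rs acc))
        (R % 2 ^ W % pp) := rfl
      rw [e] at h3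
      have hR : R % 2 ^ W % pp = x % pp := by rw [g2, cons_mod _ hxl]
      rw [hR] at h3
      rcases hxp : x % pp with _ | a
      · rw [hxp] at h3
        simp only [force_eq, shiftRight_eq] at h3
        refine pivot_sound W M k c₀ cs hM hk Rs _ (fun R hR => h1 R (by simp [hR])) ?_ h3
        intro S hS
        rcases List.mem_cons.1 hS with rfl | hS
        swap
        · exact h2 S hS
        refine ⟨xs, by simpa using g1, by rw [g2, cons_div _ hxl],
          fun z hz => (g3 z (by simp [hz])).trans (by omega), ?_⟩
        simp only [dot] at g4
        have : (x : ZMod pp) = 0 := by rw [← ZMod.natCast_mod, hxp]; simp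
        simpa [this] using g4
      · rw [hxp] at h3
        simp only [force_eq] at h3
        generalize powmod (Nat.sub 65520 a) 16 65519 = iv at h3
        have hlen : cs.length + 1 = (x :: xs).length := by simpa using g1.symm
        have hlt : ∀ y ∈ x :: xs, y < 2 ^ W := fun y hy => by have := g3 y hy; omega
        rw [g2, hlen, normRow_eq W iv _ hlt, Bool.and_eq_true] at h3
        obtain ⟨h3, h4⟩ := h3
        have h3 := Nat.eq_of_beq_eq_true h3
        have hb : ∀ y : ℕ, y % pp < 2 ^ W := fun y => by
          have := Nat.mod_lt y hpos
          have : pp ≤ pp * pp := by decide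
          omega
        rw [List.map_cons, cons_mod _ (hb _)] at h3
        have hdot := dot_normalize iv (c₀ :: cs) (x :: xs)
        rw [g4, mul_zero, List.map_cons, h3] at hdot
        rw [List.map_cons, h3] at h4
        simp only [dot, neg_one_eq] at hdot
        have hc : c₀ = dot cs (xs.map fun x => x * iv % pp) := by linear_combination -hdot
        have hcs := elimRows_sound W M _ k c₀ cs (xs.map fun x => x * iv % pp)
          (by simp at hlen ⊢; omega) rfl
          (by intro y hy; simp only [List.mem_map] at hy
              obtain ⟨z, _, rfl⟩ := hy; exact Nat.mod_lt _ hpos)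
          hc hM hk Rs acc (fun R hR => h1 R (by simp [hR])) h2 h4
        have hz : ∀ (cs : List (ZMod pp)) (L : List ℕ), (∀ x ∈ cs, x = 0) → dot cs L = 0 := by
          intro cs
          induction cs with
          | nil => intro L _; rfl
          | cons c cs ih =>
            intro L h
            cases L with
            | nil => rfl
            | cons y L =>
              simp [dot, h c (by simp), ih L (fun x hx => h x (by simp [hx]))]
        intro z hz'
        rcases List.mem_cons.1 hz' with rfl | hz'
        · rw [hc]; exact hz _ _ hcs
        · exact hcs z hz'

theorem go_sound (W : ℕ) : ∀ (h M : ℕ) (c : List (ZMod pp)) (rows : List ℕ), c.length = h →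
    M + h * (pp * pp) < 2 ^ W → (∀ R ∈ rows, RowOK W M c R) → go W h rows = true →
    ∀ x ∈ c, x = 0
  | 0, _, c, _, hc, _, _, _ => by
    have := List.length_eq_zero_iff.1 hc
    simp [this]
  | h + 1, M, c₀ :: cs, rows, hc, hM, hr, hg => by
    have hl : cs.length = h := by simpa using hc
    have hg' : pivot W (cs.length + 1) (go W h) rows [] = true := by rw [hl]; exact hg
    rw [add_mul, one_mul] at hM
    refine pivot_sound W M (go W h) c₀ cs (by omega) ?_ rows [] hr (by simp) hg'
    intro rows' hr' hgtail
    exact go_sound W h _ cs rows' hl (by omega) hr' hgtail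

/-! ### The check -/

/-- `∏ (x - y)` over the list, times `x + 1`, modulo `pp`. -/
def dprodN (x : ℕ) (ys : List ℕ) : ℕ :=
  List.rec (Nat.succ x)
    (fun y _ ih => Nat.mod (Nat.mul (Nat.sub (Nat.add x pp) y) ih) pp) ys

/-- The Vandermonde product of the listed points followed by `-1`, modulo `pp`. -/
def vandN (xs : List ℕ) : ℕ :=
  List.rec 1 (fun x xs ih => Nat.mod (Nat.mul (dprodN x xs) ih) pp) xs

/-- `∑ S ^ j * g (r - j / 2) (i + j - 1)` over the odd `j ≤ 2 * r + 1`, in Horner form. -/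
def horner (S : ℕ) (r : ℕ) : (ℕ → ℕ → ℕ) → ℕ → ℕ :=
  Nat.rec (fun g i => Nat.mul S (g 0 i))
    (fun r ih g i =>
      Nat.mul S (Nat.add (g (Nat.succ r) i) (Nat.mul S (ih g (Nat.succ (Nat.succ i)))))) r

/-- The values of `f` at the lists of `m` odd numbers with bounded sum, packed into `r ^ m` lanes. -/
def initP (W r : ℕ) (m : ℕ) : ℕ → (List ℕ → ℕ) → ℕ :=
  Nat.rec (fun _ f => f [])
    (fun m ih bud f => horner (Nat.pow 2 (Nat.mul W (Nat.pow r m))) bud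
      (fun bud' i => ih bud' (fun b => f (i :: b))) 1) m

/-- The initial table: entry `j` packs the values of `f` at the lists `j :: b` with `b` of length
`m`. Entries at even `j` are zero, because `f` stands for a function supported on lists of odd
numbers. -/
def initL (W r m : ℕ) (f : List ℕ → ℕ) (bud : ℕ) : ℕ → List ℕ → List ℕ :=
  Nat.rec
    (fun i acc => 0 :: force (initP W r m 0 (fun b => f (i :: b))) fun x => x :: acc)
    (fun bud ih i acc =>
      0 :: force (initP W r m (Nat.succ bud) (fun b => f (i :: b))) fun x =>
        x :: ih (Nat.succ (Nat.succ i)) acc) bud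

/-- Reduce the entries of a list to literals before passing it on. -/
def forceL {α : Type} (l : List ℕ) : (List ℕ → α) → α :=
  List.rec (fun k => k []) (fun a _ ih k => force a fun y => ih fun ls => k (y :: ls)) l

/-- Reduce the entries of a list of lists to literals before passing it on. -/
def forceLL {α : Type} (l : List (List ℕ)) : (List (List ℕ) → α) → α :=
  List.rec (fun k => k []) (fun a _ ih k => forceL a fun y => ih fun ls => k (y :: ls)) l

/-- Weights of the inner variables together with the lane strides of their unit shifts. -/
def shOf (r : ℕ) : List ℕ → List (ℕ × ℕ)
  | [] => []
  | w :: ws => (w, r ^ ws.length) :: shOf r ws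

/-- Add to `acc` the weighted shifts of the packed number `a` in the inner variables. -/
def stepA (W : ℕ) (sh : List (ℕ × ℕ)) (a : ℕ) : ℕ → ℕ :=
  List.rec (fun acc => acc)
    (fun p _ ih acc =>
      force (Nat.add acc (Nat.mul p.1 (Nat.shiftRight a (Nat.mul W p.2)))) ih) sh

/-- One multiplication by `ω`: from the table of `DD (w :: ws) k` to that of `DD (w :: ws) (k + 1)`.
The table loses its last entry, as the degree in `x` drops by one. -/
def stepL (W w : ℕ) (sh : List (ℕ × ℕ)) (l : List ℕ) : List ℕ :=
  List.rec []
    (fun a tl ih =>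
      List.rec [] (fun a' _ _ => stepA W sh a (Nat.add a (Nat.mul w a')) :: ih) tl) l

/-- `stepL` iterated `k` times. -/
def iter {α : Type} (W w : ℕ) (sh : List (ℕ × ℕ)) (k : ℕ) : List ℕ → (List ℕ → α) → α :=
  Nat.rec (fun l K => K l) (fun _ ih l K => forceL (stepL W w sh l) fun l' => ih l' K) k

/-- Lists `c :: e` with `e ∈ E (d - c)`, for `c` from the given start and at most the given number
of values of `c`; the last argument is what remains of the degree. -/
def loopE (E : ℕ → List (List ℕ)) (A : ℕ) : ℕ → ℕ → List (List ℕ) :=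
  Nat.rec (fun _ _ => [])
    (fun _ ihc c d => (E d).map (c :: ·) ++ Nat.rec [] (fun d' _ => ihc (Nat.succ c) d') d) A

/-- Exponents `b` of the degree-`d` monomials `t ^ (d - ∑ b) * x ^ b` with `b` below the bounds `As`
and `d - ∑ b < 2 * n`, for `m + 1` variables besides `t`. -/
def enumI (n : ℕ) (m : ℕ) : List ℕ → ℕ → List (List ℕ) :=
  Nat.rec
    (fun As d => (List.range (min (As.headD 0) (d + 1) - (d + 1 - 2 * n))).map
      fun i => [d + 1 - 2 * n + i])
    (fun _ ih As d => loopE (ih As.tail) (As.headD 0) 0 d) m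

/-- Prepend to `acc` the lanes that `R` selects from the successive blocks of `S` bits of `a`. -/
def loopR (R : ℕ → ℕ → ℕ → ℕ) (S acc : ℕ) (A : ℕ) : ℕ → ℕ → ℕ :=
  Nat.rec (fun _ _ => acc)
    (fun _ ihc a d =>
      force (Nat.rec acc (fun d' _ => force (Nat.shiftRight a S) fun a' => ihc a' d') d)
        fun accu => force (Nat.mod a (Nat.pow 2 S)) (R d accu)) A

/-- The lanes of `a` at the exponents listed by `enumI`, packed in that order in front of `acc`. -/
def rowI (W n r : ℕ) (m : ℕ) : List ℕ → ℕ → ℕ → ℕ → ℕ :=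
  Nat.rec
    (fun As d acc a =>
      force (Nat.sub (Nat.succ d) (Nat.mul 2 n)) fun lo =>
      force (Nat.pow 2 (Nat.mul W (Nat.sub (Nat.min (As.headD 0) (Nat.succ d)) lo))) fun C =>
      Nat.add (Nat.mod (Nat.shiftRight a (Nat.mul W lo)) C) (Nat.mul C acc))
    (fun m ih As d acc a =>
      force (Nat.mul W (Nat.pow r (Nat.succ m))) fun S =>
        loopR (ih As.tail) S acc (As.headD 0) a d) m

/-- The row of the Gram matrix belonging to the exponents `j :: b`, where `T` is the table from its
entry `j` on and `q = qOf r b`: lane `qOf r e` of the block read at lane `q` is the table value at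
`b + e`. The multiple `K * (q + 1)` of `pp`, in every lane, does not change residues; it makes the
low bits of the blocks distinct. Big numbers are hashed by their low bits, and without it blocks
ending in zeros collide. -/
def rowL (K L W n r m q : ℕ) (As : List ℕ) (d : ℕ) (T : List ℕ) (A : ℕ) : ℕ :=
  Nat.rec (motive := fun _ => List ℕ → ℕ → ℕ) (fun _ _ => 0)
    (fun _ ihc T d =>
      force (Nat.rec 0 (fun d' _ => ihc T.tail d') d) fun accu =>
      force (Nat.add (Nat.mod (Nat.shiftRight (T.headD 0) (Nat.mul W q)) (Nat.pow 2 (Nat.mul W L)))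
        (Nat.mul K (Nat.succ q))) (rowI W n r m As d accu))
    A T d

/-- The lane of the exponents `b`: the number with base-`r` digits `b`. -/
def qOf (r : ℕ) : List ℕ → ℕ
  | [] => 0
  | b :: bs => b * r ^ bs.length + qOf r bs

/-- Pass the rows `rowL` at the exponents listed in `l` to a continuation. -/
def rowsF (K L W n r m A : ℕ) (As : List ℕ) (d : ℕ) (T : List ℕ) (l : List (List ℕ)) :
    (List ℕ → Bool) → Bool :=
  List.rec (fun k => k [])
    (fun b _ ih k =>
      force (qOf r b.tail) fun q =>
      force (rowL K L W n r m q As d (Nat.rec T (fun _ ih => ih.tail) (b.headD 0)) A) fun R =>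
      ih fun l => k (R :: l)) l

/-- The number with `L` lanes all equal to `1`. -/
def repN (W L : ℕ) : ℕ :=
  Nat.div (Nat.sub (Nat.pow 2 (Nat.mul W L)) 1) (Nat.sub (Nat.pow 2 W) 1)

/-- A bound for the lanes of the table after `k` steps. -/
def bndT (w : ℕ) (ws : List ℕ) (k : ℕ) : ℕ := pp * (1 + w + ws.sum) ^ k

/-- The complete check for `n` variables in degree `d`, with `m + 2` variables besides `t`, whose
exponent bounds are `A :: As` and whose weights in `ω` are `w :: ws`. Exponents are packed in base
`r = N + 1`, lanes have `W` bits, `k = N - 2 * d` is the power of `ω`, and `bud` is half the excess of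
`N` over the smallest sum of `m + 3` odd numbers. -/
def checkD (W n r m bud d k : ℕ) (A w : ℕ) (As ws : List ℕ) : Bool :=
  forceL (initL W r (m + 1) vandN bud 1 (List.replicate (m + 2) 0)) fun T =>
  iter W w (shOf r ws) k T fun T =>
  forceLL (enumI n (m + 1) (A :: As) d) fun l =>
  force (Nat.mul (As.headD 0) (Nat.pow r m)) fun L =>
  force (repN W L) fun K =>
  force (Nat.mul pp (Nat.mul K K)) fun K =>
  force l.length fun h =>
  and (Nat.ble (bndT w ws k + pp * (L * r ^ (m + 1)) + h * (pp * pp) + 1) (2 ^ W))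
    (rowsF K L W n r m A As d T l (go W h))

/-! ### Lanes of packed numbers -/

/-- The `q`-th digit of `a` in base `B`. -/
def dg (B a q : ℕ) : ℕ := a / B ^ q % B

theorem dg_zero' (B a : ℕ) : dg B a 0 = a % B := by simp [dg]

theorem dg_succ (B a q : ℕ) : dg B a (q + 1) = dg B (a / B) q := by
  simp [dg, Nat.div_div_eq_div_mul, pow_succ']

theorem dg_zero_left (B q : ℕ) : dg B 0 q = 0 := by simp [dg]

theorem dg_shift (B a s q : ℕ) : dg B (a / B ^ s) q = dg B a (s + q) := by
  simp [dg, Nat.div_div_eq_div_mul, pow_add]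

theorem dg_mod_lt (B : ℕ) : ∀ (L q a : ℕ), q < L → dg B (a % B ^ L) q = dg B a q
  | 0, _, _, h => by omega
  | L + 1, 0, a, _ => by
    rw [dg_zero', dg_zero', pow_succ', Nat.mod_mul_right_mod]
  | L + 1, q + 1, a, h => by
    rw [dg_succ, dg_succ, pow_succ', Nat.mod_mul_right_div_self, dg_mod_lt B L q _ (by omega)]

theorem dg_of_lt {B a L q : ℕ} (hB : 0 < B) (h : a < B ^ L) (hq : L ≤ q) : dg B a q = 0 := by
  rw [dg, Nat.div_eq_of_lt (h.trans_le (Nat.pow_le_pow_right hB hq)), Nat.zero_mod]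

theorem dg_mod_le (B a L q : ℕ) (hB : 0 < B) : dg B (a % B ^ L) q ≤ dg B a q := by
  rcases lt_or_ge q L with h | h
  · rw [dg_mod_lt _ _ _ _ h]
  · rw [dg_of_lt hB (Nat.mod_lt _ (pow_pos hB _)) h]; exact Nat.zero_le _

/-- Every base-`B` digit of `a` is at most `M`. -/
def Good (B a M : ℕ) : Prop := ∀ q, dg B a q ≤ M

theorem Good.div {B a M : ℕ} (h : Good B a M) : Good B (a / B) M := fun q => by
  rw [← dg_succ]; exact h _

theorem Good.shift {B a M : ℕ} (h : Good B a M) (s : ℕ) : Good B (a / B ^ s) M := fun q => by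
  rw [dg_shift]; exact h _

theorem Good.mono {B a M M' : ℕ} (h : Good B a M) (hM : M ≤ M') : Good B a M' :=
  fun q => (h q).trans hM

theorem dg_add {B M M' : ℕ} (hM : M + M' < B) : ∀ (q a b : ℕ), Good B a M → Good B b M' →
    dg B (a + b) q = dg B a q + dg B b q
  | 0, a, b, ha, hb => by
    have h1 := ha 0
    have h2 := hb 0
    rw [dg_zero'] at h1 h2
    rw [dg_zero', dg_zero', dg_zero', Nat.add_mod, Nat.mod_eq_of_lt (by omega)]
  | q + 1, a, b, ha, hb => by
    have h1 := ha 0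
    have h2 := hb 0
    rw [dg_zero'] at h1 h2
    rw [dg_succ, dg_succ, dg_succ, Nat.add_div_eq_of_add_mod_lt (by omega)]
    exact dg_add hM q _ _ ha.div hb.div

theorem Good.add {B a b M M' : ℕ} (hM : M + M' < B) (ha : Good B a M) (hb : Good B b M') :
    Good B (a + b) (M + M') := fun q => by
  rw [dg_add hM q a b ha hb]; exact Nat.add_le_add (ha q) (hb q)

theorem dg_mul {B a M : ℕ} (ha : Good B a M) : ∀ (w : ℕ), w * M < B →
    ∀ q, dg B (w * a) q = w * dg B a q
  | 0, _, q => by simp [dg_zero_left]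
  | w + 1, hw, q => by
    rw [add_mul, one_mul] at hw
    have ih := dg_mul ha w (by omega)
    have hg : Good B (w * a) (w * M) := fun q => by rw [ih]; exact Nat.mul_le_mul_left _ (ha q)
    rw [add_mul, one_mul, add_mul, one_mul, dg_add hw q _ _ hg ha, ih]

theorem Good.mul {B a M : ℕ} (ha : Good B a M) (w : ℕ) (hw : w * M < B) :
    Good B (w * a) (w * M) := fun q => by
  rw [dg_mul ha w hw]; exact Nat.mul_le_mul_left _ (ha q)

theorem dg_block (B a s q : ℕ) (hs : 0 < s) :
    dg B a q = dg B (a / (B ^ s) ^ (q / s) % B ^ s) (q % s) := by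
  rw [dg_mod_lt _ _ _ _ (Nat.mod_lt _ hs), ← pow_mul, dg_shift, Nat.div_add_mod]

theorem ofDigits_map_dg (B : ℕ) : ∀ (len a : ℕ),
    a % B ^ len = Nat.ofDigits B ((List.range len).map fun i => dg B a i)
  | 0, a => by simp [Nat.mod_one]
  | len + 1, a => by
    rw [List.range_succ_eq_map, List.map_cons, List.map_map, Nat.ofDigits_cons, pow_succ',
      Nat.mod_mul, ofDigits_map_dg B len (a / B), dg_zero']
    simp only [Function.comp_def, Nat.succ_eq_add_one, dg_succ]

theorem div_mod_pow_eq (B a lo len : ℕ) :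
    a / B ^ lo % B ^ len = Nat.ofDigits B ((List.range len).map fun i => dg B a (lo + i)) := by
  rw [ofDigits_map_dg]; simp only [dg_shift]

/-! ### Lane-wise constant multiples of the modulus -/

theorem repN_eq (W L : ℕ) (hW : 0 < W) : repN W L = ∑ i ∈ Finset.range L, (2 ^ W) ^ i := by
  have h2 : 2 ≤ 2 ^ W := by
    calc 2 = 2 ^ 1 := rfl
      _ ≤ _ := Nat.pow_le_pow_right (by omega) hW
  rw [Nat.geomSum_eq h2, ← pow_mul]
  rfl

theorem good_cons {B x Y M M' : ℕ} (hY : Good B Y M) (hx : x ≤ M') (hM : M' < B) (hMM : M' ≤ M) :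
    Good B (x + B * Y) M
  | 0 => by
    rw [dg_zero', Nat.add_mul_mod_self_left, Nat.mod_eq_of_lt (by omega)]; omega
  | q + 1 => by
    rw [dg_succ, Nat.add_mul_div_left _ _ (by omega), Nat.div_eq_of_lt (by omega), zero_add]
    exact hY q

theorem good_zero (B M : ℕ) : Good B 0 M := fun q => by simp [dg_zero_left]

theorem good_rep (B : ℕ) (hB : 1 < B) : ∀ L, Good B (∑ i ∈ Finset.range L, B ^ i) 1
  | 0 => by simpa using good_zero B 1
  | L + 1 => by
    rw [Finset.sum_range_succ']
    simp only [pow_succ', ← Finset.mul_sum]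
    rw [add_comm, pow_zero]
    exact good_cons (good_rep B hB L) le_rfl hB le_rfl

theorem Good.mulB {B Y M : ℕ} (hB : 0 < B) (hY : Good B Y M) : Good B (B * Y) M
  | 0 => by simp [dg_zero']
  | q + 1 => by rw [dg_succ, Nat.mul_div_cancel_left _ hB]; exact hY q

theorem good_rep_mul {B Y M : ℕ} (hB : 1 < B) (hY : Good B Y M) : ∀ L, L * M < B →
    Good B ((∑ i ∈ Finset.range L, B ^ i) * Y) (L * M)
  | 0, _ => by simpa using good_zero B 0
  | L + 1, h => by
    rw [add_mul, one_mul] at h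
    have ih := good_rep_mul hB hY L (by omega)
    rw [Finset.sum_range_succ']
    simp only [pow_succ', ← Finset.mul_sum]
    rw [pow_zero, add_mul, one_mul, mul_assoc, add_mul, one_mul]
    exact (ih.mulB (by omega)).add h hY

theorem good_repN_sq (W L : ℕ) (hW : 0 < W) (hL : L < 2 ^ W) :
    Good (2 ^ W) (repN W L * repN W L) L := by
  have h1 : 1 < 2 ^ W := Nat.one_lt_two_pow (by omega)
  rw [repN_eq W L hW]
  simpa using good_rep_mul h1 (good_rep _ h1 L) L (by simpa using hL)

/-! ### The top-degree functional and its derivatives -/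

/-- `(x + 1) * ∏ (x - y)` over the listed `y`. -/
def dprod {R : Type*} [CommRing R] (x : R) : List R → R
  | [] => x + 1
  | y :: ys => (x - y) * dprod x ys

/-- The Vandermonde product of the listed points followed by `-1`. -/
def VV {R : Type*} [CommRing R] : List R → R
  | [] => 1
  | x :: xs => dprod x xs * VV xs

/-- The value of the top-degree functional on the monomial `t ^ (N - ∑ b) * x ^ b`. -/
def lam (b : List ℕ) : ℤ := if ∀ x ∈ b, x % 2 = 1 then VV (b.map fun x : ℕ => (x : ℤ)) else 0

/-- The sum of the weighted unit shifts of `F` at `b`. -/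
def SS : List ℕ → (List ℕ → ℤ) → List ℕ → ℤ
  | w :: ws, F, b :: bs => w * F ((b + 1) :: bs) + SS ws (fun bs => F (b :: bs)) bs
  | _, _, _ => 0

/-- The value of the top-degree functional on `ω ^ k * t ^ (N - k - ∑ b) * x ^ b`, where
`ω = t + ∑ w_i x_i`. -/
def DD (ws : List ℕ) : ℕ → List ℕ → ℤ
  | 0, b => lam b
  | k + 1, b => DD ws k b + SS ws (DD ws k) b

theorem map_dprod {R S : Type*} [CommRing R] [CommRing S] (f : R →+* S) (x : R) :
    ∀ ys : List R, f (dprod x ys) = dprod (f x) (ys.map f)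
  | [] => by simp [dprod]
  | y :: ys => by simp [dprod, map_dprod f x ys]

theorem map_VV {R S : Type*} [CommRing R] [CommRing S] (f : R →+* S) :
    ∀ xs : List R, f (VV xs) = VV (xs.map f)
  | [] => by simp [VV]
  | x :: xs => by simp [VV, map_dprod, map_VV f xs]

theorem dprodN_cast (x : ℕ) : ∀ ys : List ℕ, (∀ y ∈ ys, y ≤ pp) →
    (dprodN x ys : ZMod pp) = dprod (x : ZMod pp) (ys.map fun y : ℕ => (y : ZMod pp))
  | [], _ => by simp [dprodN, dprod]
  | y :: ys, h => by
    have e : dprodN x (y :: ys) = (x + pp - y) * dprodN x ys % pp := rfl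
    have hy : y ≤ x + pp := (h y (by simp)).trans (by omega)
    rw [e, ZMod.natCast_mod, Nat.cast_mul, dprodN_cast x ys fun y hy => h y (by simp [hy]),
      Nat.cast_sub hy]
    simp [dprod]

theorem vandN_cast : ∀ xs : List ℕ, (∀ x ∈ xs, x ≤ pp) →
    (vandN xs : ZMod pp) = VV (xs.map fun y : ℕ => (y : ZMod pp))
  | [], _ => by simp [vandN, VV]
  | x :: xs, h => by
    have e : vandN (x :: xs) = dprodN x xs * vandN xs % pp := rfl
    have h' : ∀ y ∈ xs, y ≤ pp := fun y hy => h y (by simp [hy])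
    rw [e, ZMod.natCast_mod, Nat.cast_mul, dprodN_cast x xs h', vandN_cast xs h']
    simp [VV]

theorem vandN_lt (xs : List ℕ) : vandN xs < pp := by
  cases xs with
  | nil => decide
  | cons x xs => exact Nat.mod_lt _ (by decide)

theorem lam_cast (b : List ℕ) (h : ∀ x ∈ b, x ≤ pp) :
    ((if ∀ x ∈ b, x % 2 = 1 then vandN b else 0 : ℕ) : ZMod pp) = (lam b : ZMod pp) := by
  unfold lam
  split_ifs
  · rw [vandN_cast b h]
    have := map_VV (Int.castRingHom (ZMod pp)) (b.map fun x : ℕ => (x : ℤ))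
    simp only [eq_intCast, List.map_map] at this
    rw [this]; congr 1
  · simp

/-! ### The initial table -/

theorem horner_lt {S : ℕ} (hS : 0 < S) : ∀ (bud : ℕ) (g : ℕ → ℕ → ℕ) (i : ℕ),
    (∀ b i, g b i < S) → horner S bud g i < S ^ (2 * bud + 2)
  | 0, g, i, h => by
    have e : horner S 0 g i = S * g 0 i := rfl
    have := h 0 i
    rw [e, mul_zero, zero_add, sq]; exact Nat.mul_lt_mul_of_pos_left this hS
  | bud + 1, g, i, h => by
    have e : horner S (bud + 1) g i = S * (g (bud + 1) i + S * horner S bud g (i + 2)) := rfl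
    have ih := horner_lt hS bud g (i + 2) h
    have h1 := h (bud + 1) i
    rw [e, show 2 * (bud + 1) + 2 = (2 * bud + 2) + 1 + 1 by ring, pow_succ', pow_succ']
    refine Nat.mul_lt_mul_of_pos_left ?_ hS
    calc g (bud + 1) i + S * horner S bud g (i + 2) < S + S * horner S bud g (i + 2) := by omega
      _ = S * (horner S bud g (i + 2) + 1) := by ring
      _ ≤ _ := Nat.mul_le_mul_left _ ih

theorem horner_dg {S : ℕ} (hS : 0 < S) : ∀ (bud : ℕ) (g : ℕ → ℕ → ℕ) (i : ℕ),
    (∀ b i, g b i < S) → ∀ c, dg S (horner S bud g i) c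
      = if c % 2 = 1 ∧ c / 2 ≤ bud then g (bud - c / 2) (i + c - 1) else 0
  | 0, g, i, h, c => by
    have e : horner S 0 g i = S * g 0 i := rfl
    rw [e]
    match c with
    | 0 => simp [dg_zero']
    | 1 => simp [dg_succ, dg_zero', Nat.mul_div_cancel_left _ hS, Nat.mod_eq_of_lt (h _ _)]
    | c + 2 =>
      rw [dg_succ, dg_succ, Nat.mul_div_cancel_left _ hS, Nat.div_eq_of_lt (h _ _), dg_zero_left,
        if_neg (by omega)]
  | bud + 1, g, i, h, c => by
    have e : horner S (bud + 1) g i = S * (g (bud + 1) i + S * horner S bud g (i + 2)) := rfl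
    rw [e]
    match c with
    | 0 => simp [dg_zero']
    | 1 => simp [dg_succ, dg_zero', Nat.mul_div_cancel_left _ hS, Nat.mod_eq_of_lt (h _ _)]
    | c + 2 =>
      rw [dg_succ, dg_succ, Nat.mul_div_cancel_left _ hS, Nat.add_mul_div_left _ _ hS,
        Nat.div_eq_of_lt (h _ _), zero_add, horner_dg hS bud g (i + 2) h c]
      have h1 : (c + 2) % 2 = c % 2 := by omega
      have h2 : (c + 2) / 2 = c / 2 + 1 := by omega
      rw [h1, h2]
      have h3 : bud + 1 - (c / 2 + 1) = bud - c / 2 := by omega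
      have h4 : i + (c + 2) - 1 = i + 2 + c - 1 := by omega
      simp only [h3, h4, Nat.add_le_add_iff_right]

/-- Half the excess of a list of odd numbers over the list of ones. -/
def hs : List ℕ → ℕ
  | [] => 0
  | b :: bs => b / 2 + hs bs

theorem qOf_lt {r : ℕ} : ∀ (b : List ℕ), (∀ x ∈ b, x < r) → qOf r b < r ^ b.length
  | [], _ => by simp [qOf]
  | b :: bs, h => by
    have ih := qOf_lt bs fun x hx => h x (by simp [hx])
    have hb := h b (by simp)
    rw [qOf, List.length_cons, pow_succ']
    calc b * r ^ bs.length + qOf r bs < b * r ^ bs.length + r ^ bs.length := by omega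
      _ = (b + 1) * r ^ bs.length := by ring
      _ ≤ _ := Nat.mul_le_mul_right _ hb

theorem initP_spec (W r B0 : ℕ) (hB0 : 2 * B0 + 2 ≤ r) (hW : pp < 2 ^ W) : ∀ (m bud : ℕ)
    (f : List ℕ → ℕ), bud ≤ B0 → (∀ b, f b < pp) →
    initP W r m bud f < (2 ^ W) ^ (r ^ m) ∧ Good (2 ^ W) (initP W r m bud f) pp ∧
    ∀ b : List ℕ, b.length = m → (∀ x ∈ b, x < r) → dg (2 ^ W) (initP W r m bud f) (qOf r b)
      = if (∀ x ∈ b, x % 2 = 1) ∧ hs b ≤ bud then f b else 0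
  | 0, bud, f, _, hf => by
    have e : initP W r 0 bud f = f [] := rfl
    have h0 := hf []
    refine ⟨by simp [e]; omega, fun q => ?_, fun b hb _ => ?_⟩
    · rcases q with _ | q
      · rw [e, dg_zero', Nat.mod_eq_of_lt (by omega)]; omega
      · rw [e, dg_of_lt (L := 1) (by positivity) (by simp; omega) (by omega)]; exact Nat.zero_le _
    · have := List.length_eq_zero_iff.1 hb
      subst this
      simp [e, qOf, hs, dg_zero', Nat.mod_eq_of_lt (h0.trans hW)]
  | m + 1, bud, f, hbud, hf => by
    set g : ℕ → ℕ → ℕ := fun bud' i => initP W r m (min bud' B0) (fun b => f (i :: b)) with hg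
    have hB : 0 < 2 ^ W := by positivity
    have hr : 0 < r := by omega
    have hs' : 0 < r ^ m := pow_pos hr _
    have hSpos : 0 < (2 ^ W) ^ r ^ m := pow_pos hB _
    have ih := fun bud' i => initP_spec W r B0 hB0 hW m (min bud' B0) (fun b => f (i :: b))
      (min_le_right _ _) fun b => hf _
    have e : initP W r (m + 1) bud f = horner ((2 ^ W) ^ r ^ m) bud g 1 := by
      have e1 : initP W r (m + 1) bud f = horner (2 ^ (W * r ^ m)) bud
        (fun bud' i => initP W r m bud' (fun b => f (i :: b))) 1 := rfl
      rw [e1, pow_mul]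
      have key : ∀ (S bud i : ℕ), bud ≤ B0 →
          horner S bud (fun bud' i => initP W r m bud' (fun b => f (i :: b))) i
            = horner S bud g i := by
        intro S bud
        induction bud with
        | zero => intro i _; simp [horner, hg]
        | succ bud ihb =>
          intro i hb
          have := ihb (i + 2) (by omega)
          have e2 : ∀ g : ℕ → ℕ → ℕ, horner S (bud + 1) g i
            = S * (g (bud + 1) i + S * horner S bud g (i + 2)) := fun _ => rfl
          rw [e2, e2, this]
          simp [hg, min_eq_left hb]
      exact key _ _ _ hbud
    have hgS : ∀ b i, g b i < (2 ^ W) ^ r ^ m := fun b i => (ih b i).1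
    have hblk : ∀ q, dg (2 ^ W) (initP W r (m + 1) bud f) q =
        dg (2 ^ W) (if q / r ^ m % 2 = 1 ∧ q / r ^ m / 2 ≤ bud then
          g (bud - q / r ^ m / 2) (1 + q / r ^ m - 1) else 0) (q % r ^ m) := by
      intro q
      rw [dg_block _ _ _ _ hs', e, ← horner_dg hSpos bud g 1 hgS]; rfl
    refine ⟨?_, ?_, ?_⟩
    · rw [e]
      refine (horner_lt hSpos bud g 1 hgS).trans_le ?_
      rw [← pow_mul, pow_succ]
      exact Nat.pow_le_pow_right hB (Nat.mul_le_mul_left _ (by omega))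
    · intro q
      rw [hblk]
      split_ifs
      · exact (ih _ _).2.1 _
      · simp [dg_zero_left]
    · intro b hb hbr
      match b, hb, hbr with
      | c :: b', hb, hbr =>
        have hl : b'.length = m := by simpa using hb
        have hbr' : ∀ x ∈ b', x < r := fun x hx => hbr x (by simp [hx])
        have hq := qOf_lt b' hbr'
        rw [hl] at hq
        have e1 : qOf r (c :: b') = c * r ^ m + qOf r b' := by rw [qOf, hl]
        have e2 : qOf r (c :: b') / r ^ m = c := by
          rw [e1, add_comm, Nat.add_mul_div_right _ _ hs', Nat.div_eq_of_lt hq, zero_add]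
        have e3 : qOf r (c :: b') % r ^ m = qOf r b' := by
          rw [e1, add_comm, Nat.add_mul_mod_self_right, Nat.mod_eq_of_lt hq]
        rw [hblk, e2, e3]
        have e4 : 1 + c - 1 = c := by omega
        rw [e4]
        by_cases h1 : c % 2 = 1 ∧ c / 2 ≤ bud
        · rw [if_pos h1, (ih _ _).2.2 b' hl hbr']
          have : min (bud - c / 2) B0 = bud - c / 2 := min_eq_left (by omega)
          rw [this]
          congr 1
          simp only [List.mem_cons, forall_eq_or_imp, hs, h1.1, true_and, eq_iff_iff]
          have := h1.2
          exact and_congr_right fun _ => by omega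
        · rw [if_neg h1, dg_zero_left, if_neg]
          simp only [List.mem_cons, forall_eq_or_imp, hs]
          rintro ⟨⟨h2, _⟩, h3⟩
          exact h1 ⟨h2, by omega⟩

theorem initL_spec (W r m : ℕ) (f : List ℕ → ℕ) (z : ℕ) : ∀ (bud i : ℕ),
    (initL W r m f bud i (List.replicate z 0)).length = 2 * bud + 2 + z ∧
    ∀ c, (initL W r m f bud i (List.replicate z 0)).getD c 0
      = if c % 2 = 1 ∧ c / 2 ≤ bud then
          initP W r m (bud - c / 2) (fun b => f ((i + c - 1) :: b)) else 0
  | 0, i => by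
    have e : initL W r m f 0 i (List.replicate z 0) = 0 ::
      force (initP W r m 0 (fun b => f (i :: b))) fun x => x :: List.replicate z 0 := rfl
    rw [e, force_eq]
    refine ⟨by simp; omega, fun c => ?_⟩
    match c with
    | 0 => simp
    | 1 => simp
    | c + 2 =>
      rw [if_neg (by omega)]
      simp [List.getD]
  | bud + 1, i => by
    have e : initL W r m f (bud + 1) i (List.replicate z 0) = 0 ::
      force (initP W r m (bud + 1) (fun b => f (i :: b))) fun x =>
        x :: initL W r m f bud (i + 2) (List.replicate z 0) := rfl
    have ih := initL_spec W r m f z bud (i + 2)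
    rw [e, force_eq]
    refine ⟨by simp [ih.1]; omega, fun c => ?_⟩
    match c with
    | 0 => simp
    | 1 => simp
    | c + 2 =>
      have h := ih.2 c
      have h1 : (c + 2) % 2 = c % 2 := by omega
      have h2 : (c + 2) / 2 = c / 2 + 1 := by omega
      have h3 : bud + 1 - (c / 2 + 1) = bud - c / 2 := by omega
      have h4 : i + (c + 2) - 1 = i + 2 + c - 1 := by omega
      simp only [h1, h2, h3, h4, Nat.add_le_add_iff_right]
      exact h

theorem forceL_eq {α : Type} : ∀ (l : List ℕ) (k : List ℕ → α), forceL l k = k l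
  | [], _ => rfl
  | a :: l, k => by
    have e : forceL (a :: l) k = force a fun a' => forceL l fun l' => k (a' :: l') := rfl
    rw [e, force_eq, forceL_eq l]

theorem forceLL_eq {α : Type} : ∀ (l : List (List ℕ)) (k : List (List ℕ) → α),
    forceLL l k = k l
  | [], _ => rfl
  | a :: l, k => by
    have e : forceLL (a :: l) k = forceL a fun a' => forceLL l fun l' => k (a' :: l') := rfl
    rw [e, forceL_eq, forceLL_eq l]

/-! ### The iterated step -/

/-- The table `T` holds the values of `DD (w :: ws) k`, modulo `pp`, at all exponents of degree at
most `N - k`. -/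
def TabOK (B r N M w : ℕ) (ws : List ℕ) (k : ℕ) (T : List ℕ) : Prop :=
  T.length = N + 1 - k ∧ (∀ a ∈ T, Good B a M) ∧
  ∀ j (b : List ℕ), b.length = ws.length → j + b.sum ≤ N - k →
    (dg B (T.getD j 0) (qOf r b) : ZMod pp) = (DD (w :: ws) k (j :: b) : ZMod pp)

theorem mem_le_sum : ∀ (b : List ℕ) (x : ℕ), x ∈ b → x ≤ b.sum := fun _ _ h =>
  List.single_le_sum (by simp) _ h

theorem hs_le : ∀ b : List ℕ, (∀ x ∈ b, x % 2 = 1) → 2 * hs b + b.length = b.sum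
  | [], _ => rfl
  | b :: bs, h => by
    have ih := hs_le bs fun x hx => h x (by simp [hx])
    have := h b (by simp)
    simp only [hs, List.length_cons, List.sum_cons]
    omega

theorem tab_init (W N w bud : ℕ) (ws : List ℕ) (hN : N = 2 * bud + ws.length + 2)
    (hW : pp < 2 ^ W) (hNp : N ≤ pp) :
    TabOK (2 ^ W) (N + 1) N pp w ws 0
      (initL W (N + 1) ws.length vandN bud 1 (List.replicate (ws.length + 1) 0)) := by
  have h := initL_spec W (N + 1) ws.length vandN (ws.length + 1) bud 1
  have hP := fun bud' (hb : bud' ≤ bud) i => initP_spec W (N + 1) bud (by omega) hW ws.length bud'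
    (fun b => vandN (i :: b)) hb fun b => vandN_lt _
  refine ⟨by rw [h.1]; omega, fun a ha => ?_, fun j b hb hj => ?_⟩
  · obtain ⟨c, hc, rfl⟩ := List.mem_iff_getElem.1 ha
    rw [← List.getD_eq_getElem _ 0 hc, h.2]
    split_ifs
    · exact (hP _ (by omega) _).2.1
    · exact good_zero _ _
  · rw [h.2]
    have hbr : ∀ x ∈ b, x < N + 1 := fun x hx => by have := mem_le_sum b x hx; omega
    have hL := lam_cast (j :: b) (by
      intro x hx
      have := mem_le_sum _ x hx
      rw [List.sum_cons] at this
      omega)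
    rw [DD, ← hL]
    congr 1
    have e : 1 + j - 1 = j := by omega
    rw [e]
    by_cases h0 : ∀ x ∈ j :: b, x % 2 = 1
    · have hh := hs_le _ h0
      simp only [hs, List.length_cons, List.sum_cons] at hh
      rw [if_pos h0, if_pos ⟨h0 j (by simp), by omega⟩, (hP _ (by omega) _).2.2 b hb hbr,
        if_pos ⟨fun x hx => h0 x (by simp [hx]), by omega⟩]
    · rw [if_neg h0]
      split_ifs with h1
      · rw [(hP _ (by omega) _).2.2 b hb hbr, if_neg]
        rintro ⟨h2, _⟩
        apply h0
        intro x hx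
        rcases List.mem_cons.1 hx with rfl | hx
        · exact h1.1
        · exact h2 x hx
      · rw [dg_zero_left]

theorem stepA_spec (W r a M : ℕ) (ha : Good (2 ^ W) a M) : ∀ (ws : List ℕ) (acc M0 : ℕ),
    Good (2 ^ W) acc M0 → M0 + ws.sum * M < 2 ^ W →
    Good (2 ^ W) (stepA W (shOf r ws) a acc) (M0 + ws.sum * M) ∧
    ∀ (q0 : ℕ) (F : List ℕ → ℤ) (b : List ℕ), b.length = ws.length →
      (∀ b' : List ℕ, b'.length = ws.length → b'.sum = b.sum + 1 →
        (dg (2 ^ W) a (q0 + qOf r b') : ZMod pp) = (F b' : ZMod pp)) →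
      (dg (2 ^ W) (stepA W (shOf r ws) a acc) (q0 + qOf r b) : ZMod pp)
        = dg (2 ^ W) acc (q0 + qOf r b) + (SS ws F b : ZMod pp)
  | [], acc, M0, h0, _ => by
    have e : stepA W (shOf r []) a acc = acc := rfl
    rw [e]
    exact ⟨by simpa using h0, fun q0 F b _ _ => by simp [SS]⟩
  | w :: ws, acc, M0, h0, hM => by
    have e : stepA W (shOf r (w :: ws)) a acc = force (acc + w * Nat.shiftRight a (W * r ^ ws.length))
      (stepA W (shOf r ws) a) := rfl
    rw [List.sum_cons, add_mul, ← add_assoc] at hM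
    have hwM : w * M < 2 ^ W := by omega
    have hsh := (ha.shift (r ^ ws.length)).mul w hwM
    have h1 := h0.add (by omega) hsh
    have ih := stepA_spec W r a M ha ws _ _ h1 (by omega)
    rw [e, force_eq, shiftRight_eq, pow_mul, List.sum_cons, add_mul, ← add_assoc]
    refine ⟨ih.1, fun q0 F b hb hF => ?_⟩
    match b, hb, hF with
    | b :: bs, hb, hF =>
      have hl : bs.length = ws.length := by simpa using hb
      have ih2 := ih.2 (q0 + b * r ^ ws.length) (fun bs => F (b :: bs)) bs hl (by
        intro b' hb' hs'
        have := hF (b :: b') (by simp [hb']) (by simp [hs']; omega)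
        rw [← this, qOf, hb', add_assoc])
      have e1 : q0 + b * r ^ ws.length + qOf r bs = q0 + qOf r (b :: bs) := by
        rw [qOf, hl, add_assoc]
      rw [e1] at ih2
      rw [ih2, dg_add (by omega) _ _ _ h0 hsh, dg_mul (ha.shift _) w hwM, dg_shift]
      have := hF ((b + 1) :: bs) (by simp [hl]) (by simp; omega)
      have e2 : r ^ ws.length + (q0 + qOf r (b :: bs)) = q0 + qOf r ((b + 1) :: bs) := by
        rw [qOf, qOf, hl]; ring
      rw [e2]
      simp only [SS]
      push_cast
      rw [this]
      ring

theorem stepL_spec (W w : ℕ) (sh : List (ℕ × ℕ)) : ∀ l : List ℕ,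
    (stepL W w sh l).length = l.length - 1 ∧
    ∀ j, j + 1 < l.length → (stepL W w sh l).getD j 0
      = stepA W sh (l.getD j 0) (l.getD j 0 + w * l.getD (j + 1) 0)
  | [] => ⟨rfl, fun j h => by simp at h⟩
  | [a] => ⟨rfl, fun j h => by simp at h⟩
  | a :: a' :: tl => by
    have ih := stepL_spec W w sh (a' :: tl)
    have e : stepL W w sh (a :: a' :: tl)
      = stepA W sh a (a + w * a') :: stepL W w sh (a' :: tl) := rfl
    rw [e]
    refine ⟨by simp [ih.1], fun j h => ?_⟩
    match j with
    | 0 => rfl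
    | j + 1 =>
      have := ih.2 j (by simpa using h)
      simpa using this

theorem tab_step {W N M w : ℕ} {ws : List ℕ} {k : ℕ} {T : List ℕ} (hk : k < N)
    (h : TabOK (2 ^ W) (N + 1) N M w ws k T) (hM : M * (1 + w + ws.sum) < 2 ^ W) :
    TabOK (2 ^ W) (N + 1) N (M * (1 + w + ws.sum)) w ws (k + 1)
      (stepL W w (shOf (N + 1) ws) T) := by
  obtain ⟨h1, h2, h3⟩ := h
  have hs := stepL_spec W w (shOf (N + 1) ws) T
  have eM : M * (1 + w + ws.sum) = M + w * M + ws.sum * M := by ring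
  rw [eM] at hM ⊢
  have hget : ∀ j, Good (2 ^ W) (T.getD j 0) M := by
    intro j
    by_cases hj : j < T.length
    · rw [List.getD_eq_getElem _ 0 hj]; exact h2 _ (List.getElem_mem _)
    · rw [List.getD_eq_default _ _ (by omega)]; exact good_zero _ _
  have hacc : ∀ j, Good (2 ^ W) (T.getD j 0 + w * T.getD (j + 1) 0) (M + w * M) := fun j =>
    (hget j).add (by omega) ((hget (j + 1)).mul w (by omega))
  have hA := fun j => stepA_spec W (N + 1) _ M (hget j) ws _ _ (hacc j) hM
  refine ⟨by rw [hs.1, h1]; omega, fun a ha => ?_, fun j b hb hj => ?_⟩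
  · obtain ⟨c, hc, rfl⟩ := List.mem_iff_getElem.1 ha
    have hc' := hc
    rw [hs.1] at hc'
    rw [← List.getD_eq_getElem _ 0 hc, hs.2 c (by omega)]
    exact (hA c).1
  · rw [hs.2 j (by omega)]
    have h4 := (hA j).2 0 (fun b => DD (w :: ws) k (j :: b)) b hb (by
      intro b' hb' hs'
      rw [zero_add]
      exact h3 j b' hb' (by omega))
    rw [zero_add] at h4
    rw [h4, dg_add (by omega) _ _ _ (hget j) ((hget (j + 1)).mul w (by omega)),
      dg_mul (hget (j + 1)) w (by omega)]
    push_cast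
    rw [h3 j b hb (by omega), h3 (j + 1) b hb (by omega)]
    simp only [DD, SS]
    push_cast
    ring

theorem iter_spec {α : Type} {W N w : ℕ} {ws : List ℕ} : ∀ (k k0 M : ℕ) (T : List ℕ)
    (K : List ℕ → α), k0 + k ≤ N → TabOK (2 ^ W) (N + 1) N M w ws k0 T →
    M * (1 + w + ws.sum) ^ k < 2 ^ W →
    ∃ T', TabOK (2 ^ W) (N + 1) N (M * (1 + w + ws.sum) ^ k) w ws (k0 + k) T' ∧
      iter W w (shOf (N + 1) ws) k T K = K T'
  | 0, k0, M, T, K, _, h, _ => ⟨T, by simpa using h, rfl⟩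
  | k + 1, k0, M, T, K, hk, h, hM => by
    have e : iter W w (shOf (N + 1) ws) (k + 1) T K
      = forceL (stepL W w (shOf (N + 1) ws) T) fun l' => iter W w (shOf (N + 1) ws) k l' K := rfl
    rw [pow_succ', ← mul_assoc] at hM ⊢
    have h1 : M * (1 + w + ws.sum) < 2 ^ W :=
      (Nat.le_mul_of_pos_right _ (by positivity)).trans_lt hM
    obtain ⟨T', h2, h3⟩ := iter_spec k (k0 + 1) _ _ K (by omega) (tab_step (by omega) h h1) hM
    exact ⟨T', by rwa [add_comm k 1, ← add_assoc], by rw [e, forceL_eq, h3]⟩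

/-! ### Assembling the rows -/

/-- Case distinction on a natural number. -/
def nc {α : Type} (z : α) (g : ℕ → α) : ℕ → α
  | 0 => z
  | d + 1 => g d

theorem loopE_succ (E : ℕ → List (List ℕ)) (A c d : ℕ) :
    loopE E (A + 1) c d = (E d).map (c :: ·)
      ++ nc [] (loopE E A (c + 1)) d := by
  cases d <;> rfl

theorem mem_loopE {E : ℕ → List (List ℕ)} : ∀ {A c d : ℕ} {b : List ℕ},
    b ∈ loopE E A c d ↔ ∃ i b', i < A ∧ i ≤ d ∧ b' ∈ E (d - i) ∧ b = (c + i) :: b'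
  | 0, c, d, b => by
    have e : loopE E 0 c d = [] := rfl
    simp [e]
  | A + 1, c, d, b => by
    rw [loopE_succ, List.mem_append, List.mem_map]
    constructor
    · rintro (⟨b', h, rfl⟩ | h)
      · exact ⟨0, b', by omega, by omega, h, rfl⟩
      · match d, h with
        | d + 1, h =>
          obtain ⟨i, b', h1, h2, h3, rfl⟩ := mem_loopE.1 h
          refine ⟨i + 1, b', by omega, by omega, ?_, ?_⟩
          · rwa [Nat.add_sub_add_right]
          · rw [add_assoc, add_comm 1 i]
    · rintro ⟨i, b', h1, h2, h3, rfl⟩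
      match i with
      | 0 => exact Or.inl ⟨b', h3, rfl⟩
      | i + 1 =>
        right
        match d, h2, h3 with
        | d + 1, h2, h3 =>
          refine mem_loopE.2 ⟨i, b', by omega, by omega, ?_, ?_⟩
          · rwa [Nat.add_sub_add_right] at h3
          · rw [add_assoc, add_comm 1 i]

/-- `b` has the length of `As` and lies strictly below it, entry by entry. -/
def Below : List ℕ → List ℕ → Prop
  | [], [] => True
  | b :: bs, A :: As => b < A ∧ Below bs As
  | _, _ => False

theorem mem_enumI {n : ℕ} : ∀ {m : ℕ} {As : List ℕ} {d : ℕ} {b : List ℕ}, As.length = m + 1 →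
    (b ∈ enumI n m As d ↔ Below b As ∧ b.sum ≤ d ∧ d < b.sum + 2 * n)
  | 0, As, d, b, hA => by
    match As, hA with
    | [A], _ =>
      have e : enumI n 0 [A] d = (List.range (min A (d + 1) - (d + 1 - 2 * n))).map
        fun i => [d + 1 - 2 * n + i] := rfl
      rw [e, List.mem_map]
      constructor
      · rintro ⟨i, hi, rfl⟩
        rw [List.mem_range] at hi
        simp only [Below, List.sum_cons, List.sum_nil, and_true]
        omega
      · rintro ⟨h1, h2, h3⟩
        match b, h1 with
        | [x], h1 =>
          simp only [Below, List.sum_cons, List.sum_nil, and_true] at h1 h2 h3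
          refine ⟨x - (d + 1 - 2 * n), List.mem_range.2 (by omega), ?_⟩
          congr 1
          omega
  | m + 1, As, d, b, hA => by
    match As, hA with
    | A :: As, hA =>
      have hA' : As.length = m + 1 := by simpa using hA
      have e : enumI n (m + 1) (A :: As) d = loopE (enumI n m As) A 0 d := rfl
      rw [e, mem_loopE]
      constructor
      · rintro ⟨i, b', h1, h2, h3, rfl⟩
        obtain ⟨h4, h5, h6⟩ := (mem_enumI hA').1 h3
        simp only [Below, List.sum_cons]
        exact ⟨⟨by omega, h4⟩, by omega, by omega⟩
      · rintro ⟨h1, h2, h3⟩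
        match b, h1 with
        | i :: b', h1 =>
          simp only [List.sum_cons] at h2 h3
          exact ⟨i, b', h1.1, by omega, (mem_enumI hA').2 ⟨h1.2, by omega, by omega⟩, by simp⟩

theorem Below.length : ∀ {b As : List ℕ}, Below b As → b.length = As.length
  | [], [], _ => rfl
  | b :: bs, A :: As, h => by simp [h.2.length]

theorem loopR_spec {B W Lb r : ℕ} (hB : B = 2 ^ W) (E : ℕ → List (List ℕ))
    (R : ℕ → ℕ → ℕ → ℕ) (D : ℕ) (L0 : List ℕ) (hE : ∀ d ≤ D, ∀ b ∈ E d, qOf r b < Lb)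
    (hR : ∀ d ≤ D, ∀ (a acc : ℕ) (L0 : List ℕ) (P : ℕ → List ℕ → Prop),
      (∀ b ∈ E d, P (dg B a (qOf r b)) b) → acc = Nat.ofDigits B L0 →
      ∃ L, R d acc a = Nat.ofDigits B (L ++ L0) ∧ List.Forall₂ P L (E d))
    (P : ℕ → List ℕ → Prop) : ∀ (A c d a : ℕ), d ≤ D →
    (∀ i b', (c + i) :: b' ∈ loopE E A c d → P (dg B a (i * Lb + qOf r b')) ((c + i) :: b')) →
    ∃ L, loopR R (W * Lb) (Nat.ofDigits B L0) A a d = Nat.ofDigits B (L ++ L0) ∧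
      List.Forall₂ P L (loopE E A c d)
  | 0, c, d, a, _, _ => ⟨[], rfl, List.Forall₂.nil⟩
  | A + 1, c, d, a, hd, h => by
    have e : loopR R (W * Lb) (Nat.ofDigits B L0) (A + 1) a d
      = force (nc (Nat.ofDigits B L0) (fun d' => force (Nat.shiftRight a (W * Lb)) fun a' =>
            loopR R (W * Lb) (Nat.ofDigits B L0) A a' d') d)
        fun accu => force (a % 2 ^ (W * Lb)) (R d accu) := by cases d <;> rfl
    rw [e, force_eq, force_eq, loopE_succ]
    obtain ⟨L1, h1, h2⟩ : ∃ L1, (nc (Nat.ofDigits B L0) (fun d' => force (Nat.shiftRight a (W * Lb)) fun a' =>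
            loopR R (W * Lb) (Nat.ofDigits B L0) A a' d') d) = Nat.ofDigits B (L1 ++ L0) ∧
        List.Forall₂ P L1 (nc [] (loopE E A (c + 1)) d) := by
      match d, hd, h with
      | 0, _, _ => exact ⟨[], rfl, List.Forall₂.nil⟩
      | d + 1, hd, h =>
        simp only [nc, force_eq, shiftRight_eq, pow_mul]
        refine loopR_spec hB E R D L0 hE hR P A (c + 1) d _ (by omega) ?_
        intro i b' hb
        rw [← hB, dg_shift]
        have hc : c + 1 + i = c + (i + 1) := by ring
        rw [hc] at hb ⊢
        have := h (i + 1) b' (by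
          rw [loopE_succ, List.mem_append]; exact Or.inr hb)
        rwa [add_mul, one_mul, add_comm (i * Lb), add_assoc] at this
    rw [h1]
    obtain ⟨L2, h3, h4⟩ := hR d hd (a % 2 ^ (W * Lb)) _ (L1 ++ L0) (fun x b => P x (c :: b)) (by
      intro b hb
      rw [pow_mul, ← hB, dg_mod_lt _ _ _ _ (hE d hd b hb)]
      have := h 0 b (by
        rw [loopE_succ, List.mem_append, List.mem_map]; exact Or.inl ⟨b, hb, rfl⟩)
      simpa using this) rfl
    refine ⟨L2 ++ L1, by rw [h3, List.append_assoc], List.rel_append ?_ h2⟩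
    rwa [List.forall₂_map_right_iff]

theorem qOf_lt_of_mem {n r m d : ℕ} {As b : List ℕ} (hA : As.length = m + 1) (hd : d < r)
    (hb : b ∈ enumI n m As d) : qOf r b < r ^ (m + 1) := by
  obtain ⟨h1, h2, _⟩ := (mem_enumI hA).1 hb
  rw [← hA, ← h1.length]
  exact qOf_lt b fun x hx => by have := mem_le_sum b x hx; omega

theorem rowI_spec {W n r D : ℕ} (hD : D < r) : ∀ (m : ℕ) (As : List ℕ), As.length = m + 1 →
    ∀ d ≤ D, ∀ (a acc : ℕ) (L0 : List ℕ) (P : ℕ → List ℕ → Prop),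
      (∀ b ∈ enumI n m As d, P (dg (2 ^ W) a (qOf r b)) b) → acc = Nat.ofDigits (2 ^ W) L0 →
      ∃ L, rowI W n r m As d acc a = Nat.ofDigits (2 ^ W) (L ++ L0) ∧
        List.Forall₂ P L (enumI n m As d)
  | 0, As, _, d, _, a, acc, L0, P, h, hacc => by
    have e : rowI W n r 0 As d acc a =
      force (d + 1 - 2 * n) fun lo =>
      force (2 ^ (W * (min (As.headD 0) (d + 1) - lo))) fun C =>
      (Nat.shiftRight a (W * lo)) % C + C * acc := rfl
    have e2 : enumI n 0 As d = (List.range (min (As.headD 0) (d + 1) - (d + 1 - 2 * n))).map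
        fun i => [d + 1 - 2 * n + i] := rfl
    rw [e2] at h ⊢
    rw [e, force_eq, force_eq, shiftRight_eq, pow_mul, pow_mul, div_mod_pow_eq, hacc]
    refine ⟨_, (by rw [Nat.ofDigits_append, List.length_map, List.length_range] :
      _ = Nat.ofDigits (2 ^ W) (((List.range (min (As.headD 0) (d + 1) - (d + 1 - 2 * n))).map
        fun i => dg (2 ^ W) a (d + 1 - 2 * n + i)) ++ L0)), ?_⟩
    · rw [List.forall₂_map_right_iff]
      refine List.forall₂_map_left_iff.2 (List.forall₂_same.2 fun i hi => ?_)
      have := h _ (List.mem_map.2 ⟨i, hi, rfl⟩)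
      simpa [qOf] using this
  | m + 1, As, hA, d, hd, a, acc, L0, P, h, hacc => by
    match As, hA with
    | A :: As, hA =>
      have hA' : As.length = m + 1 := by simpa using hA
      have e : rowI W n r (m + 1) (A :: As) d acc a = force (W * r ^ (m + 1)) fun S =>
        loopR (rowI W n r m As) S acc A a d := rfl
      have e2 : enumI n (m + 1) (A :: As) d = loopE (enumI n m As) A 0 d := rfl
      rw [e2] at h ⊢
      rw [e, force_eq, hacc]
      refine loopR_spec (r := r) rfl (enumI n m As) (rowI W n r m As) D L0
        (fun d hd b hb => qOf_lt_of_mem hA' (by omega) hb) (rowI_spec hD m As hA') P A 0 d a hd ?_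
      intro i b' hb
      have h1 := h _ hb
      obtain ⟨i', b'', _, _, h3, h4⟩ := mem_loopE.1 hb
      have h5 : b' = b'' := by simpa using (List.cons.inj h4).2
      have hl : b'.length = m + 1 := by
        rw [h5, ((mem_enumI hA').1 h3).1.length, hA']
      rw [qOf, hl] at h1
      simpa using h1

theorem rowL_spec {K L W n r m q : ℕ} {As : List ℕ} (P : ℕ → List ℕ → Prop) {D : ℕ} (hD : D < r)
    (hAs : As.length = m + 1) : ∀ (A c d : ℕ) (T : List ℕ), d ≤ D →
    (∀ i b', (c + i) :: b' ∈ loopE (enumI n m As) A c d → b' ∈ enumI n m As (d - i) →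
      P (dg (2 ^ W) (T.getD i 0 / (2 ^ W) ^ q % (2 ^ W) ^ L + K * (q + 1)) (qOf r b'))
        ((c + i) :: b')) →
    ∃ L', rowL K L W n r m q As d T A = Nat.ofDigits (2 ^ W) L' ∧
      List.Forall₂ P L' (loopE (enumI n m As) A c d)
  | 0, c, d, T, _, _ => ⟨[], rfl, List.Forall₂.nil⟩
  | A + 1, c, d, T, hd, h => by
    have e : rowL K L W n r m q As d T (A + 1)
      = force (nc 0 (fun d' => rowL K L W n r m q As d' T.tail A) d) fun accu =>
        force ((Nat.shiftRight (T.headD 0) (W * q)) % 2 ^ (W * L) + K * (q + 1))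
          (rowI W n r m As d accu) := by cases d <;> rfl
    rw [e, force_eq, force_eq, loopE_succ]
    obtain ⟨L1, h1, h2⟩ : ∃ L1, nc 0 (fun d' => rowL K L W n r m q As d' T.tail A) d
        = Nat.ofDigits (2 ^ W) L1 ∧
        List.Forall₂ P L1 (nc [] (loopE (enumI n m As) A (c + 1)) d) := by
      match d, hd, h with
      | 0, _, _ => exact ⟨[], rfl, List.Forall₂.nil⟩
      | d + 1, hd, h =>
        refine rowL_spec P hD hAs A (c + 1) d T.tail (by omega) ?_
        intro i b' hb hb'
        have hc : c + 1 + i = c + (i + 1) := by ring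
        rw [hc] at hb ⊢
        have h0 := h (i + 1) b' (by
          rw [loopE_succ, List.mem_append]; exact Or.inr hb) (by rwa [Nat.add_sub_add_right])
        have e3 : T.tail.getD i 0 = T.getD (i + 1) 0 := by cases T <;> simp
        rwa [e3]
    rw [h1]
    obtain ⟨L2, h3, h4⟩ := rowI_spec (W := W) hD m As hAs d hd
      ((Nat.shiftRight (T.headD 0) (W * q)) % 2 ^ (W * L) + K * (q + 1)) _ L1
      (fun x b => P x (c :: b)) (by
      intro b hb
      have h0 := h 0 b (by
        rw [loopE_succ, List.mem_append, List.mem_map]; exact Or.inl ⟨b, hb, rfl⟩) hb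
      have e3 : T.headD 0 = T.getD 0 0 := by cases T <;> simp
      rw [e3, shiftRight_eq, pow_mul, pow_mul]
      simpa using h0) rfl
    refine ⟨L2 ++ L1, h3, List.rel_append ?_ h2⟩
    rwa [List.forall₂_map_right_iff]

theorem drop_rec (T : List ℕ) : ∀ b : ℕ,
    (Nat.rec T (fun _ ih => ih.tail) b : List ℕ) = T.drop b
  | 0 => by simp
  | b + 1 => by
    have := drop_rec T b
    simp only [this, List.tail_drop]

theorem rowsF_eq (K L W n r m A : ℕ) (As : List ℕ) (d : ℕ) (T : List ℕ) :
    ∀ (l : List (List ℕ)) (k : List ℕ → Bool), rowsF K L W n r m A As d T l k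
      = k (l.map fun b => rowL K L W n r m (qOf r b.tail) As d (T.drop (b.headD 0)) A)
  | [], k => rfl
  | b :: l, k => by
    have e : rowsF K L W n r m A As d T (b :: l) k
      = force (qOf r b.tail) fun q =>
        force (rowL K L W n r m q As d (Nat.rec T (fun _ ih => ih.tail) (b.headD 0)) A) fun R =>
        rowsF K L W n r m A As d T l fun l => k (R :: l) := rfl
    rw [e, force_eq, force_eq, rowsF_eq, drop_rec, List.map_cons]

theorem qOf_add (r : ℕ) : ∀ b c : List ℕ, b.length = c.length →
    qOf r (List.zipWith (· + ·) b c) = qOf r b + qOf r c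
  | [], c, h => by
    have := List.length_eq_zero_iff.1 h.symm
    simp [this, qOf]
  | b :: bs, [], h => by simp at h
  | b :: bs, c :: cs, h => by
    have h' : bs.length = cs.length := by simpa using h
    simp [qOf, qOf_add r bs cs h', h']
    ring

theorem sum_zipWith_add : ∀ b c : List ℕ, b.length = c.length →
    (List.zipWith (· + ·) b c).sum = b.sum + c.sum
  | [], c, h => by
    have := List.length_eq_zero_iff.1 h.symm
    simp [this]
  | b :: bs, [], h => by simp at h
  | b :: bs, c :: cs, h => by
    have h' : bs.length = cs.length := by simpa using h
    simp [sum_zipWith_add bs cs h']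
    ring

theorem dot_eq (F : List ℕ → ZMod pp) : ∀ (c : List (ZMod pp)) (L : List ℕ) (l : List (List ℕ)),
    List.Forall₂ (fun (x : ℕ) e => (x : ZMod pp) = F e) L l →
    dot c L = (List.zipWith (fun x e => x * F e) c l).sum
  | [], _, _, _ => by simp [dot]
  | _ :: _, [], l, h => by cases h; simp [dot]
  | c :: cs, x :: xs, _, h => by
    cases h with
    | cons h1 h2 => simp [dot, h1, dot_eq F cs xs _ h2]

theorem qOf_lt_mul {n r m d : ℕ} {As b : List ℕ} (hA : As.length = m + 1) (hd : d < r)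
    (hb : b ∈ enumI n m As d) : qOf r b < As.headD 0 * r ^ m := by
  obtain ⟨h1, h2, _⟩ := (mem_enumI hA).1 hb
  match As, b, hA, h1, h2 with
  | A :: As, x :: b, hA, h1, h2 =>
    have hl : b.length = m := by rw [h1.2.length]; simpa using hA
    have := qOf_lt (r := r) b fun y hy => by
      have := mem_le_sum b y hy
      rw [List.sum_cons] at h2
      omega
    rw [hl] at this
    rw [qOf, hl]
    calc x * r ^ m + qOf r b < x * r ^ m + r ^ m := by omega
      _ = (x + 1) * r ^ m := by ring
      _ ≤ _ := Nat.mul_le_mul_right _ h1.1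

theorem row_ok {W n N m d k w A q M Lg K j : ℕ} {As ws T b : List ℕ} (c : List (ZMod pp))
    (hws : ws.length = m + 1) (hAs : As.length = m + 1) (hd : 2 * d ≤ N) (hk : k = N - 2 * d)
    (hT : TabOK (2 ^ W) (N + 1) N M w ws k T)
    (hLg : Lg = As.headD 0 * (N + 1) ^ m)
    (hK : K = pp * (repN W Lg * repN W Lg)) (hq : q = qOf (N + 1) b)
    (hM : M + pp * (Lg * (N + 1) ^ (m + 1)) < 2 ^ W)
    (hb : j :: b ∈ enumI n (m + 1) (A :: As) d)
    (hc : c.length = (enumI n (m + 1) (A :: As) d).length)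
    (hz : (List.zipWith (fun x e => x * (DD (w :: ws) k (List.zipWith (· + ·) (j :: b) e) : ZMod pp))
      c (enumI n (m + 1) (A :: As) d)).sum = 0) :
    RowOK W (M + pp * (Lg * (N + 1) ^ (m + 1))) c
      (rowL K Lg W n (N + 1) m q As d (T.drop j) A) := by
  have hA1 : (A :: As).length = m + 1 + 1 := by simp [hAs]
  have hbB := (mem_enumI hA1).1 hb
  have hbl : b.length = m + 1 := by have := hbB.1.length; simp at this; omega
  have hjb : j + b.sum ≤ d := by simpa using hbB.2.1
  have hqr : q + 1 ≤ (N + 1) ^ (m + 1) := by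
    have := qOf_lt (r := N + 1) b fun y hy => by have := mem_le_sum b y hy; omega
    rw [hbl, ← hq] at this
    exact this
  have hW : 0 < W := by
    by_contra h0
    have h0 : W = 0 := by omega
    subst h0
    by_cases hz0 : Lg = 0
    · obtain ⟨i, b', hi, hi2, hb', _⟩ := mem_loopE.1 (show j :: b ∈ loopE (enumI n m As) A 0 d from hb)
      have := qOf_lt_mul (r := N + 1) hAs (by omega) hb'
      rw [← hLg, hz0] at this
      omega
    · have : 0 < pp * (Lg * (N + 1) ^ (m + 1)) := by
        have : 0 < pp := by decide
        positivity
      omega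
  have hpos : 0 < pp := by decide
  have hLW : Lg * (q + 1) * pp ≤ pp * (Lg * (N + 1) ^ (m + 1)) := by
    rw [mul_comm]; exact Nat.mul_le_mul_left _ (Nat.mul_le_mul_left _ hqr)
  have hLW' : Lg ≤ Lg * (q + 1) * pp := by
    rw [mul_assoc]; exact Nat.le_mul_of_pos_right _ (by positivity)
  have hrep := good_repN_sq W Lg hW (by omega)
  have hKe : K * (q + 1) = ((q + 1) * pp) * (repN W Lg * repN W Lg) := by rw [hK]; ring
  have hKl : (q + 1) * pp * Lg = Lg * (q + 1) * pp := by ring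
  have htag : Good (2 ^ W) (K * (q + 1)) (pp * (Lg * (N + 1) ^ (m + 1))) := by
    rw [hKe]
    exact (hrep.mul _ (by omega)).mono (by omega)
  have htag0 : ∀ x, ((dg (2 ^ W) (K * (q + 1)) x : ℕ) : ZMod pp) = 0 := by
    intro x
    rw [hKe, dg_mul hrep _ (by omega)]
    simp
  have hget : ∀ j, Good (2 ^ W) (T.getD j 0) M := by
    intro j
    by_cases hj : j < T.length
    · rw [List.getD_eq_getElem _ 0 hj]; exact hT.2.1 _ (List.getElem_mem _)
    · rw [List.getD_eq_default _ _ (by omega)]; exact good_zero _ _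
  obtain ⟨L', h1, h2⟩ := rowL_spec (K := K) (L := Lg) (W := W) (n := n) (q := q)
    (P := fun x e => x ≤ M + pp * (Lg * (N + 1) ^ (m + 1)) ∧
      (x : ZMod pp) = (DD (w :: ws) k (List.zipWith (· + ·) (j :: b) e) : ZMod pp))
    (show d < N + 1 by omega) hAs A 0 d (T.drop j) le_rfl (by
      intro i b' hb1 hb2
      have hb3 := (mem_enumI hA1).1 (show _ ∈ enumI n (m + 1) (A :: As) d from hb1)
      have hbl' : b'.length = m + 1 := by have := hb3.1.length; simp at this; omega
      have hib : i + b'.sum ≤ d := by simpa using hb3.2.1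
      have e1 : (T.drop j).getD i 0 = T.getD (j + i) 0 := by
        simp [List.getD_eq_getElem?_getD]
      have hblk : Good (2 ^ W) (T.getD (j + i) 0 / (2 ^ W) ^ q % (2 ^ W) ^ Lg) M := fun x =>
        (dg_mod_le _ _ _ _ (by positivity)).trans ((hget _).shift q x)
      rw [e1]
      refine ⟨(hblk.add hM htag) _, ?_⟩
      have hq' := qOf_lt_mul (r := N + 1) hAs (by omega) hb2
      rw [← hLg] at hq'
      rw [dg_add hM _ _ _ hblk htag, Nat.cast_add, htag0, add_zero, dg_mod_lt _ _ _ _ hq', dg_shift,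
        hq, ← qOf_add _ _ _ (by omega), zero_add]
      have hl : (List.zipWith (· + ·) b b').length = ws.length := by simp [hbl, hbl', hws]
      have := hT.2.2 (j + i) (List.zipWith (· + ·) b b') hl (by
        rw [sum_zipWith_add _ _ (by omega)]; omega)
      rw [this, List.zipWith_cons_cons])
  have h3 : L'.length = (enumI n (m + 1) (A :: As) d).length := h2.length_eq
  refine ⟨L', by rw [h3, hc], h1, ?_, ?_⟩
  · intro x hx
    obtain ⟨i, hi, rfl⟩ := List.mem_iff_getElem.1 hx
    exact (h2.get hi (by rw [← h2.length_eq]; exact hi)).1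
  · rw [dot_eq (fun e => (DD (w :: ws) k (List.zipWith (· + ·) (j :: b) e) : ZMod pp)) c L'
      (enumI n (m + 1) (A :: As) d) (h2.imp fun _ _ h => h.2)]
    exact hz

/-- The Gram matrix with entries `DD (w :: ws) k (b + e)`, over the listed exponents, has trivial
kernel modulo `pp` once `checkD` evaluates to `true`. -/
theorem checkD_sound {W n N m bud d k w A : ℕ} {As ws : List ℕ} (hws : ws.length = m + 1)
    (hAs : As.length = m + 1) (hN : N = 2 * bud + m + 3) (hNp : N ≤ pp) (hd : 2 * d ≤ N)
    (hk : k = N - 2 * d) (h : checkD W n (N + 1) m bud d k A w As ws = true) (c : List (ZMod pp))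
    (hc : c.length = (enumI n (m + 1) (A :: As) d).length)
    (hz : ∀ b ∈ enumI n (m + 1) (A :: As) d,
      (List.zipWith (fun x e => x * (DD (w :: ws) k (List.zipWith (· + ·) b e) : ZMod pp))
        c (enumI n (m + 1) (A :: As) d)).sum = 0) : ∀ x ∈ c, x = 0 := by
  have e : checkD W n (N + 1) m bud d k A w As ws =
    forceL (initL W (N + 1) (m + 1) vandN bud 1 (List.replicate (m + 2) 0)) fun T =>
    iter W w (shOf (N + 1) ws) k T fun T =>
    forceLL (enumI n (m + 1) (A :: As) d) fun l =>
    force (As.headD 0 * (N + 1) ^ m) fun L =>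
    force (repN W L) fun K =>
    force (pp * (K * K)) fun K =>
    force l.length fun h =>
    and (Nat.ble (bndT w ws k + pp * (L * (N + 1) ^ (m + 1)) + h * (pp * pp) + 1) (2 ^ W))
      (rowsF K L W n (N + 1) m A As d T l (go W h)) := rfl
  rw [e, forceL_eq] at h
  simp only [forceLL_eq, force_eq] at h
  set l := enumI n (m + 1) (A :: As) d with hl
  set Lg := As.headD 0 * (N + 1) ^ m with hLg
  set G : List ℕ → Bool := fun T =>
    and (Nat.ble (bndT w ws k + pp * (Lg * (N + 1) ^ (m + 1)) + l.length * (pp * pp) + 1) (2 ^ W))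
      (rowsF (pp * (repN W Lg * repN W Lg)) Lg W n (N + 1) m A As d T l (go W l.length)) with hG
  have hble : bndT w ws k + pp * (Lg * (N + 1) ^ (m + 1)) + l.length * (pp * pp) < 2 ^ W := by
    by_contra hcon
    have hf : Nat.ble (bndT w ws k + pp * (Lg * (N + 1) ^ (m + 1)) + l.length * (pp * pp) + 1)
        (2 ^ W) = false := by
      rw [Bool.eq_false_iff]
      intro h0
      have := Nat.le_of_ble_eq_true h0
      omega
    have hGf : ∀ T, G T = false := fun T => by rw [hG]; simp only [hf, Bool.false_and]
    have hit : ∀ (k : ℕ) (T : List ℕ), iter W w (shOf (N + 1) ws) k T G = false := by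
      intro k
      induction k with
      | zero => intro T; exact hGf T
      | succ k ih =>
        intro T
        have e : iter W w (shOf (N + 1) ws) (k + 1) T G
          = forceL (stepL W w (shOf (N + 1) ws) T) fun l' => iter W w (shOf (N + 1) ws) k l' G := rfl
        rw [e, forceL_eq, ih]
    rw [hit] at h
    exact Bool.false_ne_true h
  have hb1 : pp ≤ bndT w ws k := Nat.le_mul_of_pos_right _ (by positivity)
  have h0 := tab_init W N w bud ws (by omega) (by omega) hNp
  rw [hws] at h0
  obtain ⟨T, hT, hT2⟩ := iter_spec k 0 pp _ G (by omega) h0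
    (show bndT w ws k < 2 ^ W by omega)
  rw [zero_add] at hT
  rw [hT2, hG] at h
  simp only [Bool.and_eq_true] at h
  have h2 := h.2
  rw [rowsF_eq] at h2
  refine go_sound W l.length _ c _ hc hble ?_ h2
  intro R hR
  obtain ⟨b, hb, rfl⟩ := List.mem_map.1 hR
  have hA1 : (A :: As).length = m + 1 + 1 := by simp [hAs]
  have hbB := ((mem_enumI hA1).1 hb).1
  match b, hb, hbB with
  | j :: b, hb, hbB =>
    exact row_ok c hws hAs hd hk hT hLg rfl rfl
      (show bndT w ws k + pp * (Lg * (N + 1) ^ (m + 1)) < 2 ^ W by omega) hb hc (hz _ hb)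

/-! ### A shift identity for Vandermonde determinants -/

theorem add_pow_fin {n : ℕ} (k : Fin n) (x s : ℤ) : (x + s) ^ (k : ℕ) = ∑ l : Fin n,
    x ^ (l : ℕ) * (if l ≤ k then s ^ ((k : ℕ) - l) * ((k : ℕ).choose l : ℤ) else 0) := by
  have h := Fin.sum_univ_eq_sum_range (fun l : ℕ => x ^ l *
    (if l ≤ (k : ℕ) then s ^ ((k : ℕ) - l) * ((k : ℕ).choose l : ℤ) else 0)) n
  simp only [Fin.le_def]
  rw [h, add_pow]
  refine Finset.sum_subset_zero_on_sdiff
    (fun l hl => Finset.mem_range.2 ((Finset.mem_range.1 hl).trans_le k.isLt)) ?_ ?_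
  · intro l hl
    rw [if_neg, mul_zero]
    simp only [Finset.mem_sdiff, Finset.mem_range] at hl
    omega
  · intro l hl
    rw [if_pos (by simp only [Finset.mem_range] at hl; omega)]
    ring

/-- The generating function of `det_shift`: the rows `r (v i) + X • r (v i + s)` arise from the
Vandermonde matrix by a triangular matrix with `1 + X` on the diagonal. -/
theorem det_shift_poly {n : ℕ} (v : Fin n → ℤ) (s : ℤ) :
    (∑ T : Finset (Fin n), (Polynomial.X : Polynomial ℤ) ^ T.card *
      Polynomial.C (Matrix.vandermonde fun i => if i ∈ T then v i + s else v i).det)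
      = (1 + Polynomial.X) ^ n * Polynomial.C (Matrix.vandermonde v).det := by
  set D := (Matrix.detRowAlternating (R := Polynomial ℤ) (n := Fin n)).toMultilinearMap with hD
  set r : ℤ → Fin n → Polynomial ℤ := fun z k => Polynomial.C (z ^ (k : ℕ)) with hr
  have h1 := D.map_add_univ (fun i => (Polynomial.X : Polynomial ℤ) • r (v i + s)) (fun i => r (v i))
  -- expanding the determinant with rows `r (v i) + X • r (v i + s)` in its rows
  have h2 : ∀ T : Finset (Fin n),
      D (T.piecewise (fun i => (Polynomial.X : Polynomial ℤ) • r (v i + s)) (fun i => r (v i)))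
        = Polynomial.X ^ T.card *
          Polynomial.C (Matrix.vandermonde fun i => if i ∈ T then v i + s else v i).det := by
    intro T
    have e : T.piecewise (fun i => (Polynomial.X : Polynomial ℤ) • r (v i + s)) (fun i => r (v i))
        = T.piecewise (fun i => (fun _ => (Polynomial.X : Polynomial ℤ)) i •
          (fun i => r (if i ∈ T then v i + s else v i)) i)
          (fun i => r (if i ∈ T then v i + s else v i)) := by
      funext i
      by_cases h : i ∈ T <;> simp [h]
    rw [e, MultilinearMap.map_piecewise_smul, Finset.prod_const, smul_eq_mul]
    congr 1
    rw [RingHom.map_det]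
    rfl
  have h3 : D ((fun i => (Polynomial.X : Polynomial ℤ) • r (v i + s)) + fun i => r (v i))
      = (1 + Polynomial.X) ^ n * Polynomial.C (Matrix.vandermonde v).det := by
    -- the rows are those of the Vandermonde matrix times a triangular matrix
    set U : Matrix (Fin n) (Fin n) (Polynomial ℤ) := fun l k =>
      (if l = k then 1 else 0) + Polynomial.X * Polynomial.C
        (if l ≤ k then s ^ ((k : ℕ) - l) * ((k : ℕ).choose l : ℤ) else 0) with hU
    have hUt : U.BlockTriangular id := by
      intro i j hij
      have hij : j < i := hij
      simp [hU, hij.ne', not_le.2 hij]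
    have hdetU : U.det = (1 + Polynomial.X) ^ n := by
      rw [Matrix.det_of_isUpperTriangular hUt]
      simp [hU]
    have e : (fun i => (Polynomial.X : Polynomial ℤ) • r (v i + s)) + (fun i => r (v i))
        = (Polynomial.C.mapMatrix (Matrix.vandermonde v)) * U := by
      funext i k
      rw [Matrix.mul_apply]
      simp only [hU, Pi.add_apply, Pi.smul_apply, smul_eq_mul, hr, RingHom.mapMatrix_apply,
        Matrix.map_apply, Matrix.vandermonde_apply, mul_add, mul_ite, mul_one, mul_zero,
        Finset.sum_add_distrib, Finset.sum_ite_eq', Finset.mem_univ, if_true]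
      rw [add_comm]
      congr 1
      rw [add_pow_fin, map_sum, Finset.mul_sum]
      refine Finset.sum_congr rfl fun l _ => ?_
      rw [Polynomial.C_mul, mul_left_comm]
    change Matrix.det _ = _
    rw [e, Matrix.det_mul, hdetU, ← RingHom.map_det, mul_comm]
  rw [← h3, h1]
  exact (Finset.sum_congr rfl fun T _ => h2 T).symm

/-- Moving `j` of the `n` points of a Vandermonde determinant by `s`, and summing over the choices,
multiplies it by `C(n, j)`. -/
theorem det_shift {n : ℕ} (v : Fin n → ℤ) (s : ℤ) (j : ℕ) :
    ∑ T ∈ Finset.powersetCard j (Finset.univ : Finset (Fin n)),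
      (Matrix.vandermonde fun i => if i ∈ T then v i + s else v i).det
      = n.choose j * (Matrix.vandermonde v).det := by
  have h := congrArg (fun p => Polynomial.coeff p j) (det_shift_poly v s)
  simp only [Polynomial.finsetSum_coeff, Polynomial.coeff_mul_C, Polynomial.coeff_X_pow,
    Polynomial.coeff_one_add_X_pow, ite_mul, one_mul, zero_mul] at h
  rw [← h, ← Finset.sum_filter]
  apply Finset.sum_congr
  · ext T
    simp [Finset.mem_powersetCard, eq_comm]
  · intros; rfl

/-! ### The functional vanishes on the ideal -/

/-- The list `[v μ, …, v 1]`. -/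
def bl {α : Type*} : (μ : ℕ) → (Fin (μ + 1) → α) → List α
  | 0, _ => []
  | μ + 1, v => v (Fin.last _) :: bl μ fun i => v i.castSucc

theorem bl_length {α : Type*} : ∀ (μ : ℕ) (v : Fin (μ + 1) → α), (bl μ v).length = μ
  | 0, _ => rfl
  | μ + 1, v => by simp [bl, bl_length μ]

theorem bl_congr {α : Type*} : ∀ (μ : ℕ) (v w : Fin (μ + 1) → α),
    (∀ i : Fin μ, v i.succ = w i.succ) → bl μ v = bl μ w
  | 0, _, _, _ => rfl
  | μ + 1, v, w, h => by
    rw [bl, bl, ← Fin.succ_last, h, bl_congr μ _ (fun i => w i.castSucc)]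
    intro i
    rw [← Fin.succ_castSucc, h]

theorem bl_map {α β : Type*} (f : α → β) : ∀ (μ : ℕ) (v : Fin (μ + 1) → α),
    (bl μ v).map f = bl μ fun i => f (v i)
  | 0, _ => rfl
  | μ + 1, v => by simp [bl, bl_map f μ]

theorem forall_mem_bl {α : Type*} (P : α → Prop) : ∀ (μ : ℕ) (v : Fin (μ + 1) → α),
    (∀ x ∈ bl μ v, P x) ↔ ∀ i : Fin μ, P (v i.succ)
  | 0, v => by simp [bl]
  | μ + 1, v => by
    rw [bl, List.forall_mem_cons, forall_mem_bl P μ, Fin.forall_fin_succ', and_comm]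
    simp only [Fin.succ_last, Fin.succ_castSucc]

theorem bl_sum {α : Type*} [AddCommMonoid α] : ∀ (μ : ℕ) (v : Fin (μ + 1) → α),
    v 0 + (bl μ v).sum = ∑ i, v i
  | 0, v => by simp [bl]
  | μ + 1, v => by
    rw [Fin.sum_univ_castSucc, ← bl_sum μ (fun i => v i.castSucc), bl, List.sum_cons]
    rw [Fin.castSucc_zero]
    abel

theorem dprod_bl (x : ℤ) : ∀ (μ : ℕ) (v : Fin (μ + 1) → ℤ), v 0 = -1 →
    dprod x (bl μ v) = ∏ i, (x - v i)
  | 0, v, h => by simp [bl, dprod, h]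
  | μ + 1, v, h => by
    rw [bl, dprod, dprod_bl x μ _ (by simpa using h), Fin.prod_univ_castSucc (n := μ + 1), mul_comm]

theorem VV_bl : ∀ (μ : ℕ) (v : Fin (μ + 1) → ℤ), v 0 = -1 →
    VV (bl μ v) = ∏ j, ∏ i ∈ Finset.Iio j, (v j - v i)
  | 0, v, h => by
    have e : Finset.Iio (0 : Fin 1) = ∅ := by decide
    simp [bl, VV, e]
  | μ + 1, v, h => by
    rw [bl, VV, VV_bl μ _ (by simpa using h), Fin.prod_univ_castSucc (n := μ + 1),
      dprod_bl _ μ _ (by simpa using h), mul_comm]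
    congr 1
    · refine Finset.prod_congr rfl fun j _ => ?_
      rw [Fin.prod_Iio_castSucc]
    · rw [Fin.Iio_last_eq_map, Finset.prod_map]
      rfl

theorem det_vandermonde_eq_VV (μ : ℕ) (v : Fin (μ + 1) → ℤ) (h : v 0 = -1) :
    (Matrix.vandermonde v).det = VV (bl μ v) := by
  rw [VV_bl μ v h, Matrix.det_vandermonde]
  apply Finset.prod_comm'
  simp

/-- The value of the top-degree functional on the monomial with exponents `u`. -/
def val (μ : ℕ) (u : Fin (μ + 1) → ℕ) : ℤ :=
  if ∑ i, u i = (μ + 1) ^ 2 then lam (bl μ u) else 0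

theorem lam_bl (μ : ℕ) (u : Fin (μ + 1) → ℕ) : lam (bl μ u) =
    if ∀ i : Fin μ, u i.succ % 2 = 1 then
      (Matrix.vandermonde (Fin.cons (-1) fun i : Fin μ => (u i.succ : ℤ))).det else 0 := by
  have h := forall_mem_bl (fun x => x % 2 = 1) μ u
  rw [lam, det_vandermonde_eq_VV _ _ (by simp), bl_map]
  simp only [h]
  congr 2
  apply bl_congr
  simp

/-- Distinct odd numbers, none of them `1`, have a large sum. -/
theorem sum_ge_of_odd {μ : ℕ} (f : Fin μ → ℕ) (hf : Function.Injective f)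
    (hodd : ∀ i, f i % 2 = 1) (h1 : ∀ i, f i ≠ 1) : (μ + 1) ^ 2 ≤ (∑ i, f i) + 1 := by
  set g : Fin μ → ℤ := fun i => (((f i - 3) / 2 : ℕ) : ℤ) with hg
  have e : ∀ i, f i = 2 * ((f i - 3) / 2) + 3 := fun i => by
    have := hodd i
    have := h1 i
    omega
  have hgi : Function.Injective g := fun i j h => hf (by
    rw [e i, e j]
    have : (f i - 3) / 2 = (f j - 3) / 2 := by
      simp only [hg] at h
      exact Nat.cast_injective h
    rw [this])
  have h := Finset.sum_range_le_sum (s := Finset.univ.image g) (c := 0)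
    (by
      intro x hx
      obtain ⟨i, -, rfl⟩ := Finset.mem_image.1 hx
      exact Int.natCast_nonneg _)
  rw [Finset.card_image_of_injective _ hgi, Finset.sum_image (fun i _ j _ h => hgi h)] at h
  simp only [Finset.card_univ, Fintype.card_fin, zero_add, hg] at h
  have h' : ∑ i ∈ Finset.range μ, i ≤ ∑ i, (f i - 3) / 2 := by
    rw [← Nat.cast_sum, ← Nat.cast_sum] at h
    exact Nat.cast_le.1 h
  rw [Finset.sum_congr rfl fun i _ => e i, Finset.sum_add_distrib, ← Finset.mul_sum]
  have h2 := Finset.sum_range_id_mul_two μ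
  simp only [Finset.sum_const, Finset.card_univ, Fintype.card_fin, smul_eq_mul]
  have : μ * (μ - 1) + μ = μ * μ := by
    rcases μ with _ | μ
    · rfl
    · simp; ring
  nlinarith

/-- The top-degree functional vanishes on every monomial multiple of every relation. -/
theorem val_rel (μ : ℕ) (u : Fin (μ + 1) → ℕ) (J : ℕ) :
    ∑ T ∈ Finset.powersetCard J (Finset.univ : Finset (Fin μ)),
      val μ (fun i => u i + if i ∈ T.map (Fin.succEmb μ) then 2 else 0)
      = (μ + 1).choose J * val μ (fun i => u i + if i = 0 then 2 * J else 0) := by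
  have hd : ∀ T ∈ Finset.powersetCard J (Finset.univ : Finset (Fin μ)),
      ∑ i, (u i + if i ∈ T.map (Fin.succEmb μ) then 2 else 0) = (∑ i, u i) + 2 * J := by
    intro T hT
    rw [Finset.sum_add_distrib, Finset.sum_ite_mem, Finset.univ_inter, Finset.sum_const,
      Finset.card_map, (Finset.mem_powersetCard.1 hT).2, smul_eq_mul, mul_comm]
  have hd0 : ∑ i, (u i + if i = 0 then 2 * J else 0) = (∑ i, u i) + 2 * J := by
    rw [Finset.sum_add_distrib, Finset.sum_ite_eq' Finset.univ (0 : Fin (μ + 1)),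
      if_pos (Finset.mem_univ _)]
  have hb0 : bl μ (fun i => u i + if i = 0 then 2 * J else 0) = bl μ u :=
    bl_congr _ _ _ fun i => by simp
  unfold val
  rw [hd0, hb0, Finset.sum_congr rfl fun T hT => by rw [hd T hT]]
  by_cases hdeg : (∑ i, u i) + 2 * J = (μ + 1) ^ 2
  swap
  · simp [hdeg]
  simp only [hdeg, if_true]
  simp only [lam_bl]
  have hpar : ∀ T : Finset (Fin μ),
      (∀ i : Fin μ, (u i.succ + if i.succ ∈ T.map (Fin.succEmb μ) then 2 else 0) % 2 = 1) ↔
        ∀ i : Fin μ, u i.succ % 2 = 1 := by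
    intro T
    refine forall_congr' fun i => ?_
    split_ifs <;> omega
  simp only [hpar]
  by_cases hodd : ∀ i : Fin μ, u i.succ % 2 = 1
  swap
  · simp only [if_neg hodd, Finset.sum_const_zero, mul_zero]
  simp only [if_pos hodd]
  set v : Fin (μ + 1) → ℤ := Fin.cons (-1) fun i : Fin μ => (u i.succ : ℤ) with hv
  rw [← det_shift v 2 J]
  have hT : ∀ T : Finset (Fin μ), (Fin.cons (-1) fun i : Fin μ =>
      ((u i.succ + if i.succ ∈ T.map (Fin.succEmb μ) then 2 else 0 : ℕ) : ℤ) : Fin (μ + 1) → ℤ)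
      = fun i => if i ∈ T.map (Fin.succEmb μ) then v i + 2 else v i := by
    intro T
    funext i
    refine Fin.cases ?_ (fun i => ?_) i
    · simp [hv]
    · simp only [Fin.cons_succ, hv]
      split_ifs <;> simp
  simp only [hT]
  have hsub := Finset.sum_map (Finset.powersetCard J (Finset.univ : Finset (Fin μ)))
    (Finset.mapEmbedding (Fin.succEmb μ)).toEmbedding
    (fun T => (Matrix.vandermonde fun i => if i ∈ T then v i + 2 else v i).det)
  rw [← Finset.powersetCard_map] at hsub
  refine hsub.symm.trans ?_
  apply Finset.sum_subset (Finset.powersetCard_mono (Finset.subset_univ _))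
  intro T hT1 hT2
  have hcard := (Finset.mem_powersetCard.1 hT1).2
  have h0 : (0 : Fin (μ + 1)) ∈ T := by
    by_contra h0
    refine hT2 (Finset.mem_powersetCard.2 ⟨fun i hi => ?_, hcard⟩)
    refine Finset.mem_map.2 ?_
    obtain ⟨j, rfl⟩ := Fin.exists_succ_eq.2 (fun h : i = 0 => h0 (h ▸ hi))
    exact ⟨j, Finset.mem_univ _, rfl⟩
  -- the point `-1` is moved to `1`, and there is no room for distinct points
  by_contra hne
  have hinj := Matrix.det_vandermonde_ne_zero_iff.1 hne
  set f : Fin μ → ℕ := fun i => u i.succ + if i.succ ∈ T then 2 else 0 with hf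
  have hfv : ∀ i : Fin μ, (if i.succ ∈ T then v i.succ + 2 else v i.succ) = (f i : ℤ) := by
    intro i
    simp only [hf, hv, Fin.cons_succ]
    split_ifs <;> simp
  have hge := sum_ge_of_odd f ?_ ?_ ?_
  · have hs : ∑ i, f i + 2 ≤ ∑ i, (u i + if i ∈ T then 2 else 0) := by
      rw [Fin.sum_univ_succ (fun i : Fin (μ + 1) => u i + if i ∈ T then 2 else 0), if_pos h0]
      have e0 : ∑ i, f i = ∑ i : Fin μ, (u i.succ + if i.succ ∈ T then 2 else 0) := rfl
      rw [e0]; omega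
    rw [Finset.sum_add_distrib (f := u), Finset.sum_ite_mem, Finset.univ_inter, Finset.sum_const,
      hcard, smul_eq_mul] at hs
    omega
  · intro i j hij
    apply Fin.succ_injective
    apply hinj
    have h1 := hfv i
    have h2 := hfv j
    simp only [h1, h2, hij]
  · intro i
    have := hodd i
    simp only [hf]; split_ifs <;> omega
  · intro i hi
    refine Fin.succ_ne_zero i (hinj ?_)
    have := hfv i
    rw [hi] at this
    refine this.trans ?_
    simp only [if_pos h0, hv, Fin.cons_zero]
    norm_num

/-- The linear functional on `ℝ[x_0, …, x_μ]`, supported in degree `(μ + 1) ^ 2`, with the values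
`val` on monomials. -/
def Lf (μ : ℕ) : MvPolynomial (Fin (μ + 1)) ℝ →ₗ[ℝ] ℝ :=
  (basisMonomials (Fin (μ + 1)) ℝ).constr ℝ fun s => (val μ s : ℝ)

theorem Lf_monomial (μ : ℕ) (s : Fin (μ + 1) →₀ ℕ) : Lf μ (monomial s 1) = (val μ s : ℝ) := by
  have h := (basisMonomials (Fin (μ + 1)) ℝ).constr_basis ℝ (fun s => (val μ s : ℝ)) s
  rwa [coe_basisMonomials] at h

theorem Lf_mul_rel1 (μ : ℕ) (s : Fin (μ + 1) →₀ ℕ) (j : Fin (μ + 1)) :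
    Lf μ (monomial s 1 * rel1 (μ + 1) j) = 0 := by
  have e0 : (monomial s 1 : MvPolynomial (Fin (μ + 1)) ℝ) * X 0 ^ (2 * (j.val + 1))
      = monomial (s + Finsupp.single 0 (2 * (j.val + 1))) 1 := by
    rw [X_pow_eq_monomial, monomial_mul, one_mul]
  have e1 : ∀ T : Finset (Fin μ), (monomial s 1 : MvPolynomial (Fin (μ + 1)) ℝ) *
      ∏ i ∈ T, (X i.succ) ^ 2 = monomial (s + ∑ i ∈ T, Finsupp.single i.succ 2) 1 := by
    intro T
    simp only [X_pow_eq_monomial]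
    rw [← monomial_sum_one, monomial_mul, one_mul]
  have e2 : rel1 (μ + 1) j = ((μ + 1).choose (j.val + 1) : ℝ) • X 0 ^ (2 * (j.val + 1)) -
      ∑ T ∈ Finset.powersetCard (j.val + 1) (Finset.univ : Finset (Fin μ)),
        ∏ i ∈ T, (X i.succ) ^ 2 := by
    rw [smul_eq_C_mul, map_natCast]
    rfl
  rw [e2, mul_sub, mul_smul_comm, e0, Finset.mul_sum, Finset.sum_congr rfl fun T _ => e1 T, map_sub,
    map_smul, map_sum, Lf_monomial, Finset.sum_congr rfl fun T _ => Lf_monomial μ _, sub_eq_zero,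
    smul_eq_mul]
  have h := val_rel μ s (j.val + 1)
  have h1 : ∀ T : Finset (Fin μ), (fun i => s i + if i ∈ T.map (Fin.succEmb μ) then 2 else 0)
      = (⇑(s + ∑ i ∈ T, Finsupp.single i.succ 2 : Fin (μ + 1) →₀ ℕ)) := by
    intro T
    funext i
    simp only [Finsupp.add_apply, Finsupp.finsetSum_apply, Finsupp.single_apply]
    congr 1
    refine Fin.cases ?_ (fun i => ?_) i
    · simp
    · simp
  have h2 : (fun i => s i + if i = 0 then 2 * (j.val + 1) else 0)
      = (⇑(s + Finsupp.single 0 (2 * (j.val + 1)) : Fin (μ + 1) →₀ ℕ)) := by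
    funext i
    rw [Finsupp.add_apply, Finsupp.single_apply]
    simp only [eq_comm]
  simp only [h1, h2] at h
  exact_mod_cast h.symm

theorem Lf_mem (μ : ℕ) (p : MvPolynomial (Fin (μ + 1)) ℝ)
    (hp : p ∈ Ideal.span (Set.range (rel1 (μ + 1)))) : Lf μ p = 0 := by
  obtain ⟨c, rfl⟩ := Ideal.mem_span_range_iff_exists_fun.1 hp
  rw [map_sum]
  refine Finset.sum_eq_zero fun j _ => ?_
  induction c j using MvPolynomial.induction_on' with
  | monomial s a =>
    have : (monomial s a : MvPolynomial (Fin (μ + 1)) ℝ) = a • monomial s 1 := by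
      rw [smul_monomial, smul_eq_mul, mul_one]
    rw [this, smul_mul_assoc, map_smul, Lf_mul_rel1, smul_zero]
  | add p q hp hq => rw [add_mul, map_add, hp, hq, add_zero]

/-- The monomial with base variables `xs` and exponents `b`. -/
def pr {R : Type*} [CommRing R] : List R → List ℕ → R
  | x :: xs, b :: bs => x ^ b * pr xs bs
  | _, _ => 1

/-- The linear combination of the elements of `xs` with weights `ws`. -/
def dotw {R : Type*} [CommRing R] : List ℕ → List R → R
  | w :: ws, x :: xs => (w : R) * x + dotw ws xs
  | _, _ => 0

theorem SS_linear {R : Type*} [CommRing R] (φ : R →+ ℝ) :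
    ∀ (ws : List ℕ) (xs : List R) (b : List ℕ) (p : R) (F : List ℕ → ℤ), xs.length = b.length →
    ws.length = b.length →
    (∀ c : List ℕ, c.length = b.length → c.sum = b.sum + 1 → φ (p * pr xs c) = (F c : ℝ)) →
    φ (dotw ws xs * (p * pr xs b)) = (SS ws F b : ℝ)
  | [], [], [], p, F, _, _, _ => by simp [dotw, SS]
  | [], _ :: _, _, _, _, hx, hw, _ => absurd (hx.trans hw.symm) (by simp)
  | _ :: _, [], _, _, _, hx, hw, _ => absurd (hx.trans hw.symm) (by simp)
  | w :: ws, x :: xs, b :: bs, p, F, hx, hw, h => by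
    have h1 := h ((b + 1) :: bs) (by simp) (by simp; ring)
    have h2 := SS_linear φ ws xs bs (p * x ^ b) (fun bs => F (b :: bs)) (by simpa using hx)
      (by simpa using hw) (fun c hc hs => by
        rw [mul_assoc]
        exact h (b :: c) (by simpa using hc) (by simp [hs, add_assoc]))
    rw [dotw, add_mul, map_add, SS, Int.cast_add, ← h2]
    congr 1
    · rw [Int.cast_mul, ← h1, Int.cast_natCast, mul_assoc, ← nsmul_eq_mul, map_nsmul, nsmul_eq_mul]
      congr 2
      simp only [pr]
      ring
    · congr 1
      simp only [pr]
      ring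

theorem pr_bl {R : Type*} [CommRing R] : ∀ (μ : ℕ) (x : Fin (μ + 1) → R) (u : Fin (μ + 1) → ℕ),
    x 0 ^ u 0 * pr (bl μ x) (bl μ u) = ∏ i, x i ^ u i
  | 0, x, u => by simp [bl, pr]
  | μ + 1, x, u => by
    have h := pr_bl μ (fun i => x i.castSucc) (fun i => u i.castSucc)
    rw [Fin.prod_univ_castSucc (n := μ + 1), ← h, bl, bl, pr]
    simp only [Fin.castSucc_zero]
    ring

theorem exists_bl {α : Type*} : ∀ (μ : ℕ) (a : α) (b : List α), b.length = μ →
    ∃ u : Fin (μ + 1) → α, u 0 = a ∧ bl μ u = b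
  | 0, a, [], _ => ⟨fun _ => a, rfl, rfl⟩
  | μ + 1, a, b :: bs, h => by
    obtain ⟨u, h0, hu⟩ := exists_bl μ a bs (by simpa using h)
    refine ⟨Fin.snoc u b, ?_, ?_⟩
    · rw [← Fin.castSucc_zero, Fin.snoc_castSucc, h0]
    · simp [bl, hu]

theorem dotw_bl {R : Type*} [CommRing R] : ∀ (μ : ℕ) (w : Fin (μ + 1) → ℕ) (x : Fin (μ + 1) → R),
    (w 0 : R) * x 0 + dotw (bl μ w) (bl μ x) = ∑ i, (w i : R) * x i
  | 0, w, x => by simp [bl, dotw]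
  | μ + 1, w, x => by
    have h := dotw_bl μ (fun i => w i.castSucc) (fun i => x i.castSucc)
    rw [Fin.sum_univ_castSucc (n := μ + 1), ← h, bl, bl, dotw]
    simp only [Fin.castSucc_zero]
    ring

/-- The weights `[μ + 1, …, 2]` of the variables `[x_μ, …, x_1]` in `ω`. -/
def wsOf (μ : ℕ) : List ℕ := bl μ fun i => (i : ℕ) + 1

/-- The monomial of degree `d` with exponents `b` of `[x_μ, …, x_1]`, the remaining degree being
taken up by `x_0`. -/
def mon (μ d : ℕ) (b : List ℕ) : MvPolynomial (Fin (μ + 1)) ℝ := X 0 ^ (d - b.sum) * pr (bl μ X) b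

theorem Lf_mon (μ : ℕ) (b : List ℕ) (hb : b.length = μ) (hs : b.sum ≤ (μ + 1) ^ 2) :
    Lf μ (mon μ ((μ + 1) ^ 2) b) = (lam b : ℝ) := by
  obtain ⟨u, h0, hu⟩ := exists_bl μ ((μ + 1) ^ 2 - b.sum) b hb
  have e : mon μ ((μ + 1) ^ 2) b = monomial (Finsupp.equivFunOnFinite.symm u) 1 := by
    have h := pr_bl μ (X : Fin (μ + 1) → MvPolynomial (Fin (μ + 1)) ℝ) u
    rw [h0, hu] at h
    rw [mon, h, monomial_eq, C_1, one_mul, Finsupp.prod_fintype _ _ (by simp)]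
    rfl
  rw [e, Lf_monomial]
  have h1 : ⇑(Finsupp.equivFunOnFinite.symm u) = u := rfl
  rw [h1, val, hu, if_pos]
  rw [← bl_sum, hu, h0]
  omega

/-- Pairing a monomial with a power of `ω` computes the iterated weighted differences `DD`. -/
theorem Lf_omega_pow (μ : ℕ) : ∀ (k : ℕ) (b : List ℕ), b.length = μ → b.sum + k ≤ (μ + 1) ^ 2 →
    Lf μ (omegaPoly (μ + 1) ^ k * mon μ ((μ + 1) ^ 2 - k) b) = (DD (wsOf μ) k b : ℝ)
  | 0, b, hb, hs => by
    rw [pow_zero, one_mul, DD, ← Lf_mon μ b hb (by omega), Nat.sub_zero]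
  | k + 1, b, hb, hs => by
    have eω : omegaPoly (μ + 1) = X 0 + dotw (wsOf μ) (bl μ X) := by
      have h := dotw_bl μ (fun i => (i : ℕ) + 1)
        (X : Fin (μ + 1) → MvPolynomial (Fin (μ + 1)) ℝ)
      simp only [Fin.val_zero, zero_add, Nat.cast_one, one_mul] at h
      rw [wsOf, h, omegaPoly]
      refine Finset.sum_congr rfl fun i _ => ?_
      congr 1
      simp
    have h1 := SS_linear ((Lf μ).toAddMonoidHom) (wsOf μ) (bl μ X) b
      (omegaPoly (μ + 1) ^ k * X 0 ^ ((μ + 1) ^ 2 - (k + 1) - b.sum)) (DD (wsOf μ) k)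
      (by rw [bl_length, hb]) (by rw [wsOf, bl_length, hb]) (fun c hc hcs => by
        have := Lf_omega_pow μ k c (by omega) (by omega)
        rw [← this, mon, ← mul_assoc]
        have e : (μ + 1) ^ 2 - (k + 1) - b.sum = (μ + 1) ^ 2 - k - c.sum := by omega
        rw [e]; rfl)
    have h2 := Lf_omega_pow μ k b hb (by omega)
    rw [DD, Int.cast_add, ← h1, ← h2]
    change _ = Lf μ _ + Lf μ _
    rw [← map_add]
    congr 1
    have e : (μ + 1) ^ 2 - k - b.sum = (μ + 1) ^ 2 - (k + 1) - b.sum + 1 := by omega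
    rw [mon, mon, e, pow_succ (omegaPoly (μ + 1)) k]
    linear_combination (omegaPoly (μ + 1) ^ k * X 0 ^ ((μ + 1) ^ 2 - (k + 1) - b.sum) *
      pr (bl μ X) b) * eω

/-! ### Spanning sets from elimination -/

section Spanning

variable {R : Type*} [CommRing R]

theorem pr_mul : ∀ (xs : List R) (b c : List ℕ), b.length = xs.length → c.length = xs.length →
    pr xs b * pr xs c = pr xs (List.zipWith (· + ·) b c)
  | [], [], [], _, _ => by simp [pr]
  | x :: xs, b :: bs, c :: cs, hb, hc => by
    have h := pr_mul xs bs cs (by simpa using hb) (by simpa using hc)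
    rw [List.zipWith_cons_cons, pr, pr, pr, ← h]
    ring

/-- The coefficients of `(∑ (-1)^k C(n,k) t^(2k) z^k) / ∏ (1 - x ^ 2 z)`, the product over `xs`. -/
def H (t : R) (n : ℕ) : List R → ℕ → R
  | [], k => (-1) ^ k * (n.choose k : R) * t ^ (2 * k)
  | _ :: xs, 0 => H t n xs 0
  | x :: xs, k + 1 => H t n xs (k + 1) + x ^ 2 * H t n (x :: xs) k

/-- The coefficients of `∏ (1 - r ^ 2 z)`. -/
def E : List R → ℕ → R
  | [], 0 => 1
  | [], _ + 1 => 0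
  | _ :: rs, 0 => E rs 0
  | r :: rs, k + 1 => E rs (k + 1) - r ^ 2 * E rs k

theorem E_eq_zero : ∀ (rs : List R) (k : ℕ), rs.length < k → E rs k = 0
  | [], k + 1, _ => rfl
  | r :: rs, k + 1, h => by
    have h' : rs.length < k := by simpa using h
    rw [E, E_eq_zero rs k h', E_eq_zero rs (k + 1) (by omega)]
    ring

theorem H_zero (t : R) (n : ℕ) : ∀ xs : List R, H t n xs 0 = 1
  | [] => by simp [H]
  | x :: xs => by rw [H, H_zero t n xs]

/-- Dividing both series by the common factor `1 - x ^ 2 z`. -/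
theorem H_cons {t x : R} {n : ℕ} {xs rs : List R} (h : ∀ k, H t n xs k = E (x :: rs) k) :
    ∀ k, H t n (x :: xs) k = E rs k
  | 0 => by rw [H, h, E]
  | k + 1 => by
    rw [H, h, E, H_cons h k]
    ring

theorem E_eq_esymm : ∀ (l : List R) (k : ℕ),
    E l k = (-1) ^ k * ((l.map fun x => x ^ 2 : List R) : Multiset R).esymm k
  | [], 0 => by simp [E, Multiset.esymm]
  | [], k + 1 => by simp [E, Multiset.esymm, Multiset.powersetCard_zero_right]
  | r :: rs, 0 => by rw [E, E_eq_esymm rs 0]; simp [Multiset.esymm]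
  | r :: rs, k + 1 => by
    rw [E, E_eq_esymm rs k, E_eq_esymm rs (k + 1), List.map_cons, ← Multiset.cons_coe,
      Multiset.esymm, Multiset.esymm, Multiset.esymm, Multiset.powersetCard_cons, Multiset.map_add,
      Multiset.sum_add, Multiset.map_map]
    simp only [Function.comp_def, Multiset.prod_cons]
    rw [Multiset.sum_map_mul_left]
    ring

variable [Algebra ℝ R]

/-- The span of the monomials of degree `d` in `t` and `xs` whose exponents of `xs`
satisfy `Q`. -/
def G (t : R) (xs : List R) (Q : List ℕ → Prop) (d : ℕ) : Submodule ℝ R :=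
  Submodule.span ℝ {y | ∃ b, Q b ∧ b.sum ≤ d ∧ y = t ^ (d - b.sum) * pr xs b}

/-- The span of all monomials of degree `d` in `t` and `xs`. -/
def Fl (t : R) (xs : List R) (d : ℕ) : Submodule ℝ R := G t xs (fun b => b.length = xs.length) d

/-- The span of all monomials of degree `d` in `t`, `x` and `xs` whose degree in `x` is less
than `K`. -/
def Lo (t x : R) (xs : List R) (K d : ℕ) : Submodule ℝ R :=
  G t (x :: xs) (fun b => b.length = xs.length + 1 ∧ b.headD 0 < K) d

theorem G_cons {t x y : R} {xs : List R} {Q Q' : List ℕ → Prop} {c e d : ℕ} (hy : y ∈ G t xs Q e)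
    (hQ : ∀ b, Q b → Q' (c :: b)) (hd : d = c + e) : x ^ c * y ∈ G t (x :: xs) Q' d := by
  subst hd
  unfold G at hy
  induction hy using Submodule.span_induction with
  | mem y hy =>
    obtain ⟨b, hb, hs, rfl⟩ := hy
    refine Submodule.subset_span ⟨c :: b, hQ b hb, by simpa using hs, ?_⟩
    rw [List.sum_cons, Nat.add_sub_add_left, pr]
    ring
  | zero => rw [mul_zero]; exact zero_mem _
  | add y z _ _ hy hz => rw [mul_add]; exact add_mem hy hz
  | smul a y _ hy => rw [mul_smul_comm]; exact Submodule.smul_mem _ a hy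

theorem Fl_mul {t y z : R} {xs : List R} {d e f : ℕ} (hy : y ∈ Fl t xs d) (hz : z ∈ Fl t xs e)
    (hf : f = d + e) : y * z ∈ Fl t xs f := by
  subst hf
  unfold Fl G at hy hz
  induction hy using Submodule.span_induction with
  | zero => rw [zero_mul]; exact zero_mem _
  | add y z _ _ hy hz => rw [add_mul]; exact add_mem hy hz
  | smul a y _ hy => rw [smul_mul_assoc]; exact Submodule.smul_mem _ a hy
  | mem y hy =>
    obtain ⟨b, hb, hs, rfl⟩ := hy
    induction hz using Submodule.span_induction with
    | zero => rw [mul_zero]; exact zero_mem _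
    | add y z _ _ hy hz => rw [mul_add]; exact add_mem hy hz
    | smul a y _ hy => rw [mul_smul_comm]; exact Submodule.smul_mem _ a hy
    | mem z hz =>
      obtain ⟨c, hc, hs', rfl⟩ := hz
      have h1 := sum_zipWith_add b c (hb.trans hc.symm)
      refine Submodule.subset_span ⟨List.zipWith (· + ·) b c, by simp [hb, hc],
        by omega, ?_⟩
      rw [← pr_mul xs b c hb hc, show d + e - (List.zipWith (· + ·) b c).sum
        = (d - b.sum) + (e - c.sum) by omega, pow_add]
      ring

theorem Lo_mono {t x : R} {xs : List R} {K K' d : ℕ} (h : K ≤ K') : Lo t x xs K d ≤ Lo t x xs K' d :=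
  Submodule.span_mono fun _ ⟨b, hb, hs, e⟩ => ⟨b, ⟨hb.1, hb.2.trans_le h⟩, hs, e⟩

theorem Lo_le_Fl {t x : R} {xs : List R} {K d : ℕ} : Lo t x xs K d ≤ Fl t (x :: xs) d :=
  Submodule.span_mono fun _ ⟨b, hb, hs, e⟩ => ⟨b, hb.1, hs, e⟩

theorem mul_Lo {t x y : R} {xs : List R} {K d c : ℕ} (hy : y ∈ Lo t x xs K d) :
    x ^ c * y ∈ Lo t x xs (c + K) (c + d) := by
  unfold Lo G at hy
  induction hy using Submodule.span_induction with
  | mem y hy =>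
    obtain ⟨b, hb, hs, rfl⟩ := hy
    match b, hb with
    | [], hb => simp at hb
    | b :: bs, hb =>
      refine Submodule.subset_span ⟨(c + b) :: bs, ⟨by simpa using hb.1, by simpa using hb.2⟩, ?_, ?_⟩
      · simp only [List.sum_cons] at hs ⊢; omega
      · simp only [List.sum_cons, pr]
        rw [show c + d - (c + b + bs.sum) = d - (b + bs.sum) by omega]
        ring
  | zero => rw [mul_zero]; exact zero_mem _
  | add y z _ _ hy hz => rw [mul_add]; exact add_mem hy hz
  | smul a y _ hy => rw [mul_smul_comm]; exact Submodule.smul_mem _ a hy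

theorem one_mem_Fl (t : R) : ∀ xs : List R, (1 : R) ∈ Fl t xs 0
  | [] => Submodule.subset_span ⟨[], rfl, by simp, by simp [pr]⟩
  | x :: xs => by
    have h := G_cons (x := x) (c := 0) (d := 0) (Q' := fun b => b.length = (x :: xs).length)
      (one_mem_Fl t xs) (fun b hb => by simpa using hb) rfl
    rw [pow_zero, one_mul] at h
    exact h

/-- `H` is homogeneous of degree `2 * k`, with leading term `x ^ (2 * k)` in its first variable. -/
theorem H_mem (t : R) (n : ℕ) : ∀ (xs : List R) (k : ℕ), H t n xs k ∈ Fl t xs (2 * k) ∧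
    ∀ x : R, H t n (x :: xs) k - x ^ (2 * k) ∈ Lo t x xs (2 * k) (2 * k) := by
  have step : ∀ xs : List R, (∀ k, H t n xs k ∈ Fl t xs (2 * k)) →
      ∀ (x : R) k, H t n (x :: xs) k - x ^ (2 * k) ∈ Lo t x xs (2 * k) (2 * k) := by
    intro xs h x k
    induction k with
    | zero => simp [H_zero]
    | succ k ih =>
      have e : H t n (x :: xs) (k + 1) - x ^ (2 * (k + 1))
          = x ^ 0 * H t n xs (k + 1) + x ^ 2 * (H t n (x :: xs) k - x ^ (2 * k)) := by
        rw [H]; ring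
      rw [e]
      refine add_mem (G_cons (h (k + 1)) (fun b hb => ⟨by simpa using hb, by simp⟩) (by ring)) ?_
      have := mul_Lo (c := 2) ih
      rwa [show 2 + 2 * k = 2 * (k + 1) by ring] at this
  have main : ∀ (xs : List R) (k : ℕ), H t n xs k ∈ Fl t xs (2 * k) := by
    intro xs
    induction xs with
    | nil =>
      intro k
      have h : t ^ (2 * k) ∈ Fl t [] (2 * k) :=
        Submodule.subset_span ⟨[], rfl, by simp, by simp [pr]⟩
      have := Submodule.smul_mem _ ((-1 : ℝ) ^ k * (n.choose k : ℝ)) h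
      rw [Algebra.smul_def] at this
      simpa [H] using this
    | cons x xs ih =>
      intro k
      have h1 := Lo_le_Fl (step xs ih x k)
      have h2 : x ^ (2 * k) * 1 ∈ Fl t (x :: xs) (2 * k) :=
        G_cons (one_mem_Fl t xs) (fun b hb => by simpa using hb) rfl
      have := add_mem h1 h2
      simpa using this
  exact fun xs k => ⟨main xs k, fun x => step xs (main xs) x k⟩

/-- A relation expressing `x ^ K` through lower powers of `x` reduces all higher powers. -/
theorem Fl_le_Lo {t x : R} {xs : List R} {K : ℕ} (h : x ^ K ∈ Lo t x xs K K) (d : ℕ) :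
    Fl t (x :: xs) d ≤ Lo t x xs K d := by
  have key : ∀ c e : ℕ, ∀ y ∈ Fl t xs e, x ^ c * y ∈ Lo t x xs K (c + e) := by
    intro c
    induction c using Nat.strong_induction_on with
    | _ c ih =>
      intro e y hy
      rcases lt_or_ge c K with hc | hc
      · exact G_cons hy (fun b hb => ⟨by simpa using hb, hc⟩) rfl
      · have : ∀ z ∈ Lo t x xs K K, x ^ (c - K) * z * y ∈ Lo t x xs K (c + e) := by
          intro z hz
          unfold Lo G at hz
          induction hz using Submodule.span_induction with
          | zero => rw [mul_zero, zero_mul]; exact zero_mem _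
          | add u v _ _ hu hv => rw [mul_add, add_mul]; exact add_mem hu hv
          | smul a u _ hu =>
            rw [mul_smul_comm, smul_mul_assoc]; exact Submodule.smul_mem _ a hu
          | mem z hz =>
            obtain ⟨b, hb, hs, rfl⟩ := hz
            match b, hb with
            | [], hb => simp at hb
            | b :: bs, hb =>
              have hbK : b < K := hb.2
              rw [List.sum_cons] at hs
              have hz : t ^ (K - b - bs.sum) * pr xs bs ∈ Fl t xs (K - b) :=
                Submodule.subset_span ⟨bs, by simpa using hb.1, by omega, rfl⟩
              have := ih (c - K + b) (by omega) (K - b + e) _ (Fl_mul hz hy rfl)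
              rw [show c - K + b + (K - b + e) = c + e by omega] at this
              convert this using 1
              rw [List.sum_cons, pr, Nat.sub_sub, pow_add]
              ring
        have := this _ h
        rwa [← pow_add, Nat.sub_add_cancel hc] at this
  unfold Fl G
  rw [Submodule.span_le]
  rintro y ⟨b, hb, hs, rfl⟩
  match b, hb with
  | b :: bs, hb =>
    rw [List.sum_cons] at hs
    have := key b (d - b) (t ^ (d - b - bs.sum) * pr xs bs)
      (Submodule.subset_span ⟨bs, by simpa using hb, by omega, rfl⟩)
    rw [Nat.add_sub_cancel' (by omega)] at this
    rw [List.sum_cons, pr, ← Nat.sub_sub]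
    rw [mul_left_comm]
    exact this

/-- The exponent bounds: `l` consecutive even numbers from `2 * (r + 1)` on. -/
def AsN : ℕ → ℕ → List ℕ
  | 0, _ => []
  | l + 1, r => 2 * (r + 1) :: AsN l (r + 1)

/-- If `∑ (-1)^k C(n,k) t^(2k) z^k` is the product of all factors `1 - x ^ 2 z`, then dividing out
the factors of `xs` leaves the product over `rs`, a polynomial of degree `rs.length` in `z`; its next
coefficient vanishes and bounds the degree in the last variable divided out. -/
theorem Fl_le_below {t : R} {n : ℕ} : ∀ (xs rs : List R),
    (∀ k, H t n [] k = E (xs.reverse ++ rs) k) →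
    (∀ k, H t n xs k = E rs k) ∧
    ∀ d, Fl t xs d ≤ G t xs (fun b => Below b (AsN xs.length rs.length)) d
  | [], rs, h => ⟨by simpa using h, fun d => Submodule.span_mono fun y ⟨b, hb, hs, e⟩ =>
      ⟨b, by rw [List.length_eq_zero_iff.1 hb]; trivial, hs, e⟩⟩
  | x :: xs, rs, h => by
    obtain ⟨h1, h2⟩ := Fl_le_below (t := t) (n := n) xs (x :: rs) (by simpa using h)
    have h3 := H_cons h1
    refine ⟨h3, fun d => ?_⟩
    have hx : x ^ (2 * (rs.length + 1)) ∈
        Lo t x xs (2 * (rs.length + 1)) (2 * (rs.length + 1)) := by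
      have := (H_mem t n xs (rs.length + 1)).2 x
      rw [h3, E_eq_zero _ _ (Nat.lt_succ_self _), zero_sub] at this
      simpa using neg_mem this
    refine (Fl_le_Lo hx d).trans ?_
    unfold Lo G
    rw [Submodule.span_le]
    rintro y ⟨b, hb, hs, rfl⟩
    match b, hb with
    | [], hb => simp at hb
    | b :: bs, hb =>
      rw [List.sum_cons] at hs
      have hm := h2 (d - b) (Submodule.subset_span ⟨bs, by simpa using hb.1, by omega, rfl⟩)
      have := G_cons (x := x) (c := b) (d := d)
        (Q' := fun b => Below b (AsN (x :: xs).length rs.length)) hm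
        (fun c hc => ⟨hb.2, hc⟩) (by omega)
      rw [List.sum_cons, pr, ← Nat.sub_sub]
      rw [mul_left_comm]
      exact this

end Spanning

/-! ### The graded pieces -/

/-- The ideal of relations in `n = μ + 1` variables. -/
abbrev II (μ : ℕ) : Ideal (MvPolynomial (Fin (μ + 1)) ℝ) := Ideal.span (Set.range (rel1 (μ + 1)))

/-- The variables `[x_μ, …, x_1]` in the quotient algebra. -/
def qxs (μ : ℕ) : List (MvPolynomial (Fin (μ + 1)) ℝ ⧸ II μ) :=
  bl μ fun i => Ideal.Quotient.mk (II μ) (X i)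

/-- The variable `x_0` in the quotient algebra. -/
def qt (μ : ℕ) : MvPolynomial (Fin (μ + 1)) ℝ ⧸ II μ := Ideal.Quotient.mk (II μ) (X 0)

theorem bl_reverse {α : Type*} : ∀ (μ : ℕ) (v : Fin (μ + 1) → α),
    (bl μ v).reverse = List.ofFn fun i => v i.succ
  | 0, v => by simp [bl]
  | μ + 1, v => by
    rw [bl, List.reverse_cons, bl_reverse μ, List.ofFn_succ', List.concat_eq_append]
    simp only [Fin.succ_last, Fin.succ_castSucc]

theorem qrel (μ k : ℕ) : ((μ + 1).choose k : MvPolynomial (Fin (μ + 1)) ℝ ⧸ II μ) * qt μ ^ (2 * k)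
    = ∑ T ∈ Finset.powersetCard k (Finset.univ : Finset (Fin μ)),
      ∏ i ∈ T, Ideal.Quotient.mk (II μ) (X i.succ) ^ 2 := by
  rcases k with _ | k
  · simp
  rcases lt_or_ge k (μ + 1) with hk | hk
  · have h : Ideal.Quotient.mk (II μ) (rel1 (μ + 1) ⟨k, hk⟩) = 0 :=
      Ideal.Quotient.eq_zero_iff_mem.2 (Ideal.subset_span ⟨_, rfl⟩)
    have e2 : rel1 (μ + 1) ⟨k, hk⟩ = ((μ + 1).choose (k + 1) : MvPolynomial (Fin (μ + 1)) ℝ) *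
      X 0 ^ (2 * (k + 1)) - ∑ T ∈ Finset.powersetCard (k + 1) (Finset.univ : Finset (Fin μ)),
        ∏ i ∈ T, (X i.succ) ^ 2 := rfl
    rw [e2, map_sub, sub_eq_zero] at h
    simpa [qt] using h
  · rw [Nat.choose_eq_zero_of_lt (by omega), Finset.powersetCard_eq_empty.2 (by simp; omega)]
    simp

theorem qH (μ k : ℕ) : H (qt μ) (μ + 1) [] k = E ((qxs μ).reverse ++ []) k := by
  rw [List.append_nil, E_eq_esymm, qxs, bl_reverse, List.map_ofFn, ← Fin.univ_val_map,
    Finset.esymm_map_val, H, mul_assoc, qrel]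
  rfl

theorem qt_pow (μ : ℕ) : qt μ ^ (2 * (μ + 1)) = 0 := by
  have h := qrel μ (μ + 1)
  rw [Nat.choose_self, Finset.powersetCard_eq_empty.2 (by simp)] at h
  simpa using h

theorem mk_mon (μ d : ℕ) (b : List ℕ) :
    Ideal.Quotient.mk (II μ) (mon μ d b) = qt μ ^ (d - b.sum) * pr (qxs μ) b := by
  have h : ∀ (xs : List (MvPolynomial (Fin (μ + 1)) ℝ)) (b : List ℕ),
      Ideal.Quotient.mk (II μ) (pr xs b) = pr (xs.map (Ideal.Quotient.mk (II μ))) b := by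
    intro xs
    induction xs with
    | nil => intro b; simp [pr]
    | cons x xs ih =>
      intro b
      cases b with
      | nil => simp [pr]
      | cons b bs => simp [pr, ih]
  rw [mon, map_mul, map_pow, h, bl_map]
  rfl

theorem mk_mon_mem (μ d : ℕ) (b : List ℕ) (hb : b.length = μ) (hs : b.sum ≤ d) :
    Ideal.Quotient.mk (II μ) (mon μ d b) ∈ gradedPiece (II μ) d := by
  refine ⟨mon μ d b, ?_, rfl⟩
  obtain ⟨u, h0, hu⟩ := exists_bl μ (d - b.sum) b hb
  have h := pr_bl μ (X : Fin (μ + 1) → MvPolynomial (Fin (μ + 1)) ℝ) u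
  rw [h0, hu] at h
  have hd : d = ∑ i, u i := by rw [← bl_sum, h0, hu]; omega
  change (mon μ d b).IsHomogeneous d
  rw [mon, h, hd]
  refine IsHomogeneous.prod _ _ _ fun i _ => ?_
  simpa using (isHomogeneous_X ℝ i).pow (u i)

theorem gradedPiece_le (μ d : ℕ) : gradedPiece (II μ) d ≤ Fl (qt μ) (qxs μ) d := by
  rintro _ ⟨p, hp, rfl⟩
  have hp : p.IsHomogeneous d := hp
  change Ideal.Quotient.mk (II μ) p ∈ _
  rw [p.as_sum, map_sum]
  refine sum_mem fun s hs => ?_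
  have hd : s.degree = d := by
    have := hp (MvPolynomial.mem_support_iff.1 hs)
    rwa [Finsupp.degree_eq_weight_one]
  have e : (monomial s (coeff s p) : MvPolynomial (Fin (μ + 1)) ℝ)
      = coeff s p • mon μ d (bl μ s) := by
    have h := pr_bl μ (X : Fin (μ + 1) → MvPolynomial (Fin (μ + 1)) ℝ) s
    have h1 := bl_sum μ (s : Fin (μ + 1) → ℕ)
    rw [Finsupp.degree_eq_sum] at hd
    have h2 : d - (bl μ s).sum = s 0 := by omega
    rw [mon, h2, h, smul_eq_C_mul, monomial_eq, Finsupp.prod_fintype _ _ (by simp)]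
  rw [e]
  have h1 := bl_sum μ (s : Fin (μ + 1) → ℕ)
  rw [Finsupp.degree_eq_sum] at hd
  change (Ideal.Quotient.mkₐ ℝ (II μ)) _ ∈ _
  rw [map_smul]
  refine Submodule.smul_mem _ _ ?_
  change Ideal.Quotient.mk (II μ) _ ∈ _
  rw [mk_mon]
  exact Submodule.subset_span ⟨_, by rw [qxs, bl_length]; exact bl_length _ _, by omega, rfl⟩

/-- The monomials surviving the elimination span the graded pieces. -/
theorem gradedPiece_le_span (μ d : ℕ) : gradedPiece (II μ) d ≤ Submodule.span ℝ
    {y | ∃ b, (Below b (AsN μ 0) ∧ b.sum ≤ d ∧ d < b.sum + 2 * (μ + 1)) ∧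
      y = Ideal.Quotient.mk (II μ) (mon μ d b)} := by
  refine (gradedPiece_le μ d).trans (((Fl_le_below (qxs μ) [] (qH μ)).2 d).trans ?_)
  unfold G
  rw [Submodule.span_le]
  rintro y ⟨b, hb, hs, rfl⟩
  have hl : (qxs μ).length = μ := bl_length _ _
  rw [hl, List.length_nil] at hb
  rcases lt_or_ge d (b.sum + 2 * (μ + 1)) with h | h
  · exact Submodule.subset_span ⟨b, ⟨hb, hs, h⟩, (mk_mon μ d b).symm⟩
  · have : qt μ ^ (d - b.sum) = 0 := pow_eq_zero_of_le (by omega) (qt_pow μ)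
    rw [this, zero_mul]
    exact zero_mem _

theorem Below_sum : ∀ (l r : ℕ) (b : List ℕ), Below b (AsN l r) → b.sum ≤ l * (l + 2 * r)
  | 0, _, [], _ => by simp
  | l + 1, r, b :: bs, h => by
    have h1 := Below_sum l (r + 1) bs h.2
    have h2 : b < 2 * (r + 1) := h.1
    rw [List.sum_cons]
    nlinarith

theorem gradedPiece_eq_bot (μ e : ℕ) (he : (μ + 1) ^ 2 < e) : gradedPiece (II μ) e = ⊥ := by
  rw [eq_bot_iff]
  refine (gradedPiece_le_span μ e).trans ?_
  rw [Submodule.span_le]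
  rintro y ⟨b, ⟨hb, hs, h⟩, rfl⟩
  have := Below_sum μ 0 b hb
  exfalso
  nlinarith

/-! ### From Gram determinants to the Hard Lefschetz property -/

/-- The Gram matrix of the monomials with exponents in `L`, for the pairing
`(y, z) ↦ Lf (ω ^ k * y * z)`. -/
def gram (ws : List ℕ) (k : ℕ) (L : List (List ℕ)) : Matrix (Fin L.length) (Fin L.length) ℤ :=
  Matrix.of fun i j => DD ws k (List.zipWith (· + ·) (L.get i) (L.get j))

theorem sum_zipWith_ofFn {α R : Type*} [AddCommMonoid R] (f : R → α → R) :
    ∀ (L : List α) (v : Fin L.length → R),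
    (List.zipWith f (List.ofFn v) L).sum = ∑ j, f (v j) (L.get j)
  | [], v => by simp
  | a :: L, v => by
    have h := sum_zipWith_ofFn f L fun j => v j.succ
    rw [List.ofFn_succ, List.zipWith_cons_cons, List.sum_cons, h]
    exact (Fin.sum_univ_succ (n := L.length) fun j : Fin (L.length + 1) =>
      f (v j) ((a :: L).get j)).symm

/-- An integer matrix that is nonsingular modulo `pp` is nonsingular. -/
theorem gram_det_ne_zero {ws : List ℕ} {k : ℕ} {L : List (List ℕ)}
    (h : ∀ c : List (ZMod pp), c.length = L.length →
      (∀ b ∈ L, (List.zipWith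
        (fun x e => x * (DD ws k (List.zipWith (· + ·) b e) : ZMod pp)) c L).sum = 0) →
      ∀ x ∈ c, x = 0) : (gram ws k L).det ≠ 0 := by
  intro h0
  have h1 : ((Int.castRingHom (ZMod pp)).mapMatrix (gram ws k L)).det = 0 := by
    rw [← RingHom.map_det, h0, map_zero]
  obtain ⟨v, hv, hM⟩ := Matrix.exists_mulVec_eq_zero_iff.2 h1
  refine hv ?_
  have h2 := h (List.ofFn v) (by simp) ?_
  · funext i
    exact h2 _ (List.mem_ofFn.2 ⟨i, rfl⟩)
  · intro b hb
    obtain ⟨i, rfl⟩ := List.get_of_mem hb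
    rw [sum_zipWith_ofFn (fun x e => x * (DD ws k (List.zipWith (· + ·) (L.get i) e) : ZMod pp))]
    have := congrFun hM i
    rw [Matrix.mulVec, dotProduct] at this
    rw [Pi.zero_apply] at this
    rw [← this]
    refine Finset.sum_congr rfl fun j _ => mul_comm _ _

theorem Lf_gram (μ k d : ℕ) (hk : k + 2 * d = (μ + 1) ^ 2) (b c : List ℕ) (hb : b.length = μ)
    (hc : c.length = μ) (hbs : b.sum ≤ d) (hcs : c.sum ≤ d) :
    Lf μ (omegaPoly (μ + 1) ^ k * mon μ d c * mon μ d b)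
      = (DD (wsOf μ) k (List.zipWith (· + ·) b c) : ℝ) := by
  have hs := sum_zipWith_add b c (hb.trans hc.symm)
  rw [← Lf_omega_pow μ k _ (by simp [hb, hc]) (by omega)]
  congr 1
  have hx : (bl μ (X : Fin (μ + 1) → MvPolynomial (Fin (μ + 1)) ℝ)).length = μ := bl_length _ _
  rw [mon, mon, mon, ← pr_mul _ b c (by rw [hx, hb]) (by rw [hx, hc]),
    show (μ + 1) ^ 2 - k - (List.zipWith (· + ·) b c).sum = (d - b.sum) + (d - c.sum) by omega,
    pow_add]
  ring

theorem omega_mul_mem (μ k d : ℕ) (x : MvPolynomial (Fin (μ + 1)) ℝ ⧸ II μ)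
    (hx : x ∈ gradedPiece (II μ) d) :
    Ideal.Quotient.mk (II μ) (omegaPoly (μ + 1)) ^ k * x ∈ gradedPiece (II μ) (k + d) := by
  obtain ⟨p, hp, rfl⟩ := hx
  refine ⟨omegaPoly (μ + 1) ^ k * p, ?_, ?_⟩
  · have h1 : (omegaPoly (μ + 1)).IsHomogeneous 1 := by
      refine IsHomogeneous.sum _ _ _ fun i _ => ?_
      simpa using (isHomogeneous_C (Fin (μ + 1)) ((i.val : ℝ) + 1)).mul (isHomogeneous_X ℝ i)
    have h2 := (h1.pow k).mul (show p.IsHomogeneous d from hp)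
    rw [one_mul] at h2
    exact h2
  · change Ideal.Quotient.mk (II μ) _ = _ * Ideal.Quotient.mk (II μ) p
    rw [map_mul, map_pow]

/-- Injectivity on the degree-`d` piece and surjectivity onto the degree-`(N - d)` piece, from a
nonsingular Gram matrix and spanning sets of compatible sizes. -/
theorem lefschetz_at (μ d : ℕ) (hd : 2 * d ≤ (μ + 1) ^ 2) (L L' : List (List ℕ))
    (hL : ∀ b, b ∈ L ↔ Below b (AsN μ 0) ∧ b.sum ≤ d ∧ d < b.sum + 2 * (μ + 1))
    (hL' : ∀ b, Below b (AsN μ 0) ∧ b.sum ≤ (μ + 1) ^ 2 - d ∧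
      (μ + 1) ^ 2 - d < b.sum + 2 * (μ + 1) → b ∈ L')
    (hlen : L'.length ≤ L.length)
    (hdet : (gram (wsOf μ) ((μ + 1) ^ 2 - 2 * d) L).det ≠ 0) :
    (gradedPiece (II μ) d).map (LinearMap.mulLeft ℝ
      (Ideal.Quotient.mk (II μ) (omegaPoly (μ + 1)) ^ ((μ + 1) ^ 2 - 2 * d)))
        = gradedPiece (II μ) ((μ + 1) ^ 2 - d) ∧
    ∀ x ∈ gradedPiece (II μ) d,
      Ideal.Quotient.mk (II μ) (omegaPoly (μ + 1)) ^ ((μ + 1) ^ 2 - 2 * d) * x = 0 → x = 0 := by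
  have hAl : ∀ l r : ℕ, (AsN l r).length = l := by
    intro l
    induction l with
    | zero => intro r; rfl
    | succ l ih => intro r; simp [AsN, ih]
  set k := (μ + 1) ^ 2 - 2 * d with hk
  set w := Ideal.Quotient.mk (II μ) (omegaPoly (μ + 1)) with hw
  set m : Fin L.length → MvPolynomial (Fin (μ + 1)) ℝ ⧸ II μ :=
    fun j => Ideal.Quotient.mk (II μ) (mon μ d (L.get j)) with hm
  have hb : ∀ j, (L.get j).length = μ ∧ (L.get j).sum ≤ d := fun j => by
    have h := (hL _).1 (List.get_mem L j)
    exact ⟨h.1.length.trans (hAl μ 0), h.2.1⟩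
  have hspan : gradedPiece (II μ) d ≤ Submodule.span ℝ (Set.range m) := by
    refine (gradedPiece_le_span μ d).trans (Submodule.span_mono ?_)
    rintro y ⟨b, hb, rfl⟩
    obtain ⟨j, hj⟩ := List.get_of_mem ((hL b).2 hb)
    exact ⟨j, by rw [← hj]⟩
  have hmem : ∀ j, m j ∈ gradedPiece (II μ) d := fun j => mk_mon_mem μ d _ (hb j).1 (hb j).2
  -- pairing with the monomials themselves turns a relation into a kernel vector of the Gram matrix
  have hker : ∀ c : Fin L.length → ℝ, ∑ j, c j • (w ^ k * m j) = 0 → c = 0 := by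
    intro c hc
    have hp : ∑ j, c j • (omegaPoly (μ + 1) ^ k * mon μ d (L.get j)) ∈ II μ := by
      rw [← Ideal.Quotient.eq_zero_iff_mem, map_sum, ← hc]
      refine Finset.sum_congr rfl fun j _ => ?_
      change Ideal.Quotient.mkₐ ℝ (II μ) _ = _
      rw [map_smul, map_mul, map_pow]
      rfl
    have hdet' : ((Int.castRingHom ℝ).mapMatrix (gram (wsOf μ) k L)).det ≠ 0 := by
      rw [← RingHom.map_det]
      simpa using hdet
    by_contra hne
    refine hdet' (Matrix.exists_mulVec_eq_zero_iff.1 ⟨c, hne, ?_⟩)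
    funext i
    have h := Lf_mem μ _ (Ideal.mul_mem_right (mon μ d (L.get i)) _ hp)
    rw [Finset.sum_mul, map_sum] at h
    rw [Pi.zero_apply, ← h, Matrix.mulVec, dotProduct]
    refine Finset.sum_congr rfl fun j _ => ?_
    rw [smul_mul_assoc, map_smul, Lf_gram μ k d (by omega) _ _ (hb i).1 (hb j).1 (hb i).2 (hb j).2,
      smul_eq_mul, mul_comm]
    rfl
  refine ⟨?_, ?_⟩
  · have hle : (gradedPiece (II μ) d).map (LinearMap.mulLeft ℝ (w ^ k))
        ≤ gradedPiece (II μ) ((μ + 1) ^ 2 - d) := by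
      rintro _ ⟨x, hx, rfl⟩
      have := omega_mul_mem μ k d x hx
      rwa [show k + d = (μ + 1) ^ 2 - d by omega] at this
    have hge : Submodule.span ℝ (Set.range fun j => w ^ k * m j)
        ≤ (gradedPiece (II μ) d).map (LinearMap.mulLeft ℝ (w ^ k)) := by
      rw [Submodule.span_le]
      rintro _ ⟨j, rfl⟩
      exact ⟨m j, hmem j, rfl⟩
    have hli : LinearIndependent ℝ fun j => w ^ k * m j :=
      Fintype.linearIndependent_iff.2 fun c hc => congrFun (hker c hc)
    have h1 := finrank_span_eq_card hli
    set m' : Fin L'.length → MvPolynomial (Fin (μ + 1)) ℝ ⧸ II μ :=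
      fun j => Ideal.Quotient.mk (II μ) (mon μ ((μ + 1) ^ 2 - d) (L'.get j)) with hm'
    have hspan' : gradedPiece (II μ) ((μ + 1) ^ 2 - d) ≤ Submodule.span ℝ (Set.range m') := by
      refine (gradedPiece_le_span μ _).trans (Submodule.span_mono ?_)
      rintro y ⟨b, hb, rfl⟩
      obtain ⟨j, hj⟩ := List.get_of_mem (hL' b hb)
      exact ⟨j, by rw [← hj]⟩
    have h2 := finrank_range_le_card (R := ℝ) m'
    have hfin : FiniteDimensional ℝ (Submodule.span ℝ (Set.range m')) :=
      FiniteDimensional.span_of_finite ℝ (Set.finite_range m')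
    have h3 := Submodule.eq_of_le_of_finrank_le ((hge.trans hle).trans hspan') (by
      rw [h1, Fintype.card_fin]
      rw [Fintype.card_fin] at h2
      exact h2.trans hlen)
    exact le_antisymm hle ((hspan'.trans h3.ge).trans hge)
  · intro x hx h0
    obtain ⟨c, rfl⟩ := (Submodule.mem_span_range_iff_exists_fun ℝ).1 (hspan hx)
    have hc : c = 0 := hker c (by
      rw [← h0, Finset.mul_sum]
      exact Finset.sum_congr rfl fun j _ => (mul_smul_comm _ _ _).symm)
    simp [hc]

/-! ### The Gram determinants -/

set_option maxRecDepth 100000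

theorem check3 : ∀ d ∈ List.range 5, checkD 128 3 10 0 3 d (9 - 2 * d) 2 3 [4] [2] = true := by
  decide +kernel

theorem check4 : ∀ d ∈ List.range 9, checkD 128 4 17 1 6 d (16 - 2 * d) 2 4 [4, 6] [3, 2] = true := by
  decide +kernel

theorem check5_0 : checkD 128 5 26 2 10 0 25 2 5 [4, 6, 8] [4, 3, 2] = true := by
  decide +kernel

theorem check5_1 : checkD 120 5 26 2 10 1 23 2 5 [4, 6, 8] [4, 3, 2] = true := by
  decide +kernel

theorem check5_2 : checkD 112 5 26 2 10 2 21 2 5 [4, 6, 8] [4, 3, 2] = true := by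
  decide +kernel

theorem check5_3 : checkD 104 5 26 2 10 3 19 2 5 [4, 6, 8] [4, 3, 2] = true := by
  decide +kernel

theorem check5_4 : checkD 96 5 26 2 10 4 17 2 5 [4, 6, 8] [4, 3, 2] = true := by
  decide +kernel

theorem check5_5 : checkD 88 5 26 2 10 5 15 2 5 [4, 6, 8] [4, 3, 2] = true := by
  decide +kernel

theorem check5_6 : checkD 80 5 26 2 10 6 13 2 5 [4, 6, 8] [4, 3, 2] = true := by
  decide +kernel

theorem check5_7 : checkD 72 5 26 2 10 7 11 2 5 [4, 6, 8] [4, 3, 2] = true := by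
  decide +kernel

theorem check5_8 : checkD 64 5 26 2 10 8 9 2 5 [4, 6, 8] [4, 3, 2] = true := by
  decide +kernel

theorem check5_9 : checkD 56 5 26 2 10 9 7 2 5 [4, 6, 8] [4, 3, 2] = true := by
  decide +kernel

theorem check5_10 : checkD 48 5 26 2 10 10 5 2 5 [4, 6, 8] [4, 3, 2] = true := by
  decide +kernel

theorem check5_11 : checkD 48 5 26 2 10 11 3 2 5 [4, 6, 8] [4, 3, 2] = true := by
  decide +kernel

theorem check5_12 : checkD 48 5 26 2 10 12 1 2 5 [4, 6, 8] [4, 3, 2] = true := by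
  decide +kernel

theorem AsN_length : ∀ l r : ℕ, (AsN l r).length = l
  | 0, _ => rfl
  | l + 1, r => by rw [AsN, List.length_cons, AsN_length l]

/-- The Lefschetz property in degree `d`, from the Gram determinant over the exponents that `enumI`
lists; the two lists of exponents, in the degrees `d` and `N - d`, need only have compatible
lengths. -/
theorem lefschetz_of_gram {μ m d : ℕ} (hμ : μ = m + 1) (hd : 2 * d ≤ (μ + 1) ^ 2)
    (hlen : (enumI (μ + 1) m (AsN μ 0) ((μ + 1) ^ 2 - d)).length
      ≤ (enumI (μ + 1) m (AsN μ 0) d).length)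
    (hdet : (gram (wsOf μ) ((μ + 1) ^ 2 - 2 * d) (enumI (μ + 1) m (AsN μ 0) d)).det ≠ 0) :
    (gradedPiece (II μ) d).map (LinearMap.mulLeft ℝ
      (Ideal.Quotient.mk (II μ) (omegaPoly (μ + 1)) ^ ((μ + 1) ^ 2 - 2 * d)))
        = gradedPiece (II μ) ((μ + 1) ^ 2 - d) ∧
    ∀ x ∈ gradedPiece (II μ) d,
      Ideal.Quotient.mk (II μ) (omegaPoly (μ + 1)) ^ ((μ + 1) ^ 2 - 2 * d) * x = 0 → x = 0 := by
  have hl : (AsN μ 0).length = m + 1 := by rw [AsN_length, hμ]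
  exact lefschetz_at μ d hd _ _ (fun b => mem_enumI hl) (fun b => (mem_enumI hl).2) hlen hdet

theorem gram_of_check {W n N m bud d k w A : ℕ} {As ws : List ℕ} (hws : ws.length = m + 1)
    (hAs : As.length = m + 1) (hN : N = 2 * bud + m + 3) (hNp : N ≤ pp) (hd : 2 * d ≤ N)
    (hk : k = N - 2 * d) (h : checkD W n (N + 1) m bud d k A w As ws = true) :
    (gram (w :: ws) k (enumI n (m + 1) (A :: As) d)).det ≠ 0 :=
  gram_det_ne_zero fun c hc hz => checkD_sound hws hAs hN hNp hd hk h c hc hz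

theorem gram2 : ∀ d ∈ List.range 3, (gram [2] (4 - 2 * d) (enumI 2 0 [2] d)).det ≠ 0 := by
  decide +kernel

theorem len2 : ∀ d ∈ List.range 3,
    (enumI 2 0 [2] (4 - d)).length ≤ (enumI 2 0 [2] d).length := by decide +kernel

theorem len3 : ∀ d ∈ List.range 5,
    (enumI 3 1 [2, 4] (9 - d)).length ≤ (enumI 3 1 [2, 4] d).length := by decide +kernel

theorem len4 : ∀ d ∈ List.range 9,
    (enumI 4 2 [2, 4, 6] (16 - d)).length ≤ (enumI 4 2 [2, 4, 6] d).length := by decide +kernel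

theorem len5 : ∀ d ∈ List.range 13,
    (enumI 5 3 [2, 4, 6, 8] (25 - d)).length ≤ (enumI 5 3 [2, 4, 6, 8] d).length := by
  decide +kernel

theorem gram5 (d : ℕ) (hd : d < 13) :
    (gram [5, 4, 3, 2] (25 - 2 * d) (enumI 5 3 [2, 4, 6, 8] d)).det ≠ 0 := by
  have key : ∀ {W : ℕ}, checkD W 5 26 2 10 d (25 - 2 * d) 2 5 [4, 6, 8] [4, 3, 2] = true →
      (gram [5, 4, 3, 2] (25 - 2 * d) (enumI 5 3 [2, 4, 6, 8] d)).det ≠ 0 := fun h =>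
    gram_of_check (N := 25) rfl rfl rfl (by decide) (by omega) rfl h
  interval_cases d
  · exact key check5_0
  · exact key check5_1
  · exact key check5_2
  · exact key check5_3
  · exact key check5_4
  · exact key check5_5
  · exact key check5_6
  · exact key check5_7
  · exact key check5_8
  · exact key check5_9
  · exact key check5_10
  · exact key check5_11
  · exact key check5_12

theorem isHardLefschetz_of_gram {μ m : ℕ} (hμ : μ = m + 1)
    (hlen : ∀ d, 2 * d ≤ (μ + 1) ^ 2 → (enumI (μ + 1) m (AsN μ 0) ((μ + 1) ^ 2 - d)).length
      ≤ (enumI (μ + 1) m (AsN μ 0) d).length)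
    (hdet : ∀ d, 2 * d ≤ (μ + 1) ^ 2 →
      (gram (wsOf μ) ((μ + 1) ^ 2 - 2 * d) (enumI (μ + 1) m (AsN μ 0) d)).det ≠ 0) :
    IsHardLefschetzElement (II μ) (Ideal.Quotient.mk (II μ) (omegaPoly (μ + 1)))
      ((μ + 1) ^ 2) :=
  ⟨fun e he => gradedPiece_eq_bot μ e he,
    fun d hd => lefschetz_of_gram hμ hd (hlen d hd) (hdet d hd)⟩

theorem wsOf1 : wsOf 1 = [2] := by simp [wsOf, bl]

theorem wsOf2 : wsOf 2 = [3, 2] := by simp [wsOf, bl]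

theorem wsOf3 : wsOf 3 = [4, 3, 2] := by simp [wsOf, bl]

theorem wsOf4 : wsOf 4 = [5, 4, 3, 2] := by simp [wsOf, bl]

theorem hard_lefschetz2 : IsHardLefschetzElement (II 1)
    (Ideal.Quotient.mk (II 1) (omegaPoly 2)) (2 ^ 2) := by
  refine isHardLefschetz_of_gram (m := 0) rfl (fun d hd => ?_) (fun d hd => ?_)
  · exact len2 d (List.mem_range.2 (by omega))
  · rw [wsOf1]
    exact gram2 d (List.mem_range.2 (by omega))

theorem hard_lefschetz3 : IsHardLefschetzElement (II 2)
    (Ideal.Quotient.mk (II 2) (omegaPoly 3)) (3 ^ 2) := by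
  refine isHardLefschetz_of_gram (m := 1) rfl (fun d hd => ?_) (fun d hd => ?_)
  · exact len3 d (List.mem_range.2 (by omega))
  · rw [wsOf2]
    exact gram_of_check (N := 9) rfl rfl rfl (by decide) (by omega) rfl
      (check3 d (List.mem_range.2 (by omega)))

theorem hard_lefschetz4 : IsHardLefschetzElement (II 3)
    (Ideal.Quotient.mk (II 3) (omegaPoly 4)) (4 ^ 2) := by
  refine isHardLefschetz_of_gram (m := 2) rfl (fun d hd => ?_) (fun d hd => ?_)
  · exact len4 d (List.mem_range.2 (by omega))
  · rw [wsOf3]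
    exact gram_of_check (N := 16) rfl rfl rfl (by decide) (by omega) rfl
      (check4 d (List.mem_range.2 (by omega)))

theorem hard_lefschetz5 : IsHardLefschetzElement (II 4)
    (Ideal.Quotient.mk (II 4) (omegaPoly 5)) (5 ^ 2) := by
  refine isHardLefschetz_of_gram (m := 3) rfl (fun d hd => ?_) (fun d hd => ?_)
  · exact len5 d (List.mem_range.2 (by omega))
  · rw [wsOf4]
    exact gram5 d (by omega)
end HL

/-- For `2 ≤ n ≤ 5`, `ω = x_1 + 2x_2 + ⋯ + nx_n` is a Hard Lefschetz element of
`ℝ[x_1,…,x_n]/(f_1,…,f_n)` with socle degree `n²` (the cohomology of `Sp(n)//S_2`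
and `Spin(2n+1)//S_2`). -/
theorem hard_lefschetz_Sp_Spin_odd_S2 (n : ℕ) (h2 : 2 ≤ n) (h5 : n ≤ 5) :
    IsHardLefschetzElement (Ideal.span (Set.range (rel1 n)))
      (Ideal.Quotient.mk (Ideal.span (Set.range (rel1 n))) (omegaPoly n)) (n ^ 2) := by
  interval_cases n
  · exact HL.hard_lefschetz2
  · exact HL.hard_lefschetz3
  · exact HL.hard_lefschetz4
  · exact HL.hard_lefschetz5
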